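/- Subcritical weighted Hermite variation: Let q ≥ 1 be an integer, let x be a fractional Brownian motion with Hurst parameter ν ∈ (0, 1/(2q)), and let (y^{(0)},…,y^{(q)}) be controlled by (x, 1−qν) in L₂ (so ℓ = q+1). Then n^{−(1−qν)} J_0^1(y^{(0)};h^{n,q}) converges in probability to (−1/2)^q ∫₀¹ y^{(q)}_u du as n → ∞. -/

import Mathlib

/-! The weight `y^{(0)}` varies slowly on short blocks of partition points, so on each block it is
expanded around the left endpoint `t_c` in powers of `x`:
`y^{(0)}_t = ∑_{i ≤ q} y^{(i)}_{t_c} x^i_{t_c t} + r_{t_c t}`. The normalized weighted sum then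
splits into the iterated sums `J(x^i; h^{n,q})`, `i ≤ q`, multiplied by frozen weights, and a sum
of remainders.

*Iterated sums.* With the rescaled path `X_k = n^ν (x_{t_{c+k}} - x_{t_c})`, these are sums of
`X_k^i H_q(ΔX_k)`. Their second moments are mixed moments
`E[U^i V^j H_p(W) H_r(Z)]` of Gaussian vectors. Stein's identity contracts a Hermite factor with
the other factors (`mixMom_step`), which gives a recursion (`MomRec`). For `i < q` every non-zero
term contains a factor `E[ΔX_k ΔX_l]` (`MomRec.bound_rho`); these covariances are absolutely
summable because `j ↦ j^{2ν}` is concave, so that the sums telescope. For `i = q` there is in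
addition the complete contraction of each Hermite factor with its own weight
(`MomRec.main_term`); it produces the mean `q! E[X_k ΔX_k]^q`, and `E[X_k ΔX_k] → -1/2` since
`2ν < 1`. Hence the sums over `N` points, centred at `q! (-1/2)^q` for `i = q`, have second
moment `O(N^{1+2iν})` (`IsFBM.sum_sq_bound`). The condition `2qν < 1` makes this negligible after
normalization, and only the mean for `i = q` survives.

*Remainders.* By Chen's relation the sum of remainders is additive over adjacent blocks up to
products of a remainder `r^{(p)}` and an iterated sum. These are superlinear in the block length
in `L¹`, and the sum vanishes on blocks of length one, so discrete sewing (`discrete_sewing`,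
`Controlled.remSum_bound`) gives an `L¹` bound with exponent `1 + ν`.

*Conclusion.* The error on a block is `blockErr`. As the frozen weights need not be independent
of the iterated sums, they are bounded by a constant `M` outside an event of small probability.
Cutting `[0, n)` into `m` blocks (`Controlled.total_bound`), Markov's inequality shows that the
weighted sum is asymptotically `(-1/2)^q` times the Riemann sum of `y^{(q)}`, on choosing first
`M`, then `m`, then `n` large (`Controlled.tendsto_blockErr`). Riemann sums of continuous paths
converge. -/

open MeasureTheory ProbabilityTheory Filter
open scoped ENNReal NNReal

noncomputable section

variable {Ω : Type*} [MeasurableSpace Ω]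

/-- The smallest point `⌈n s⌉ / n` of the uniform `n`-partition that is `≥ s`. -/
def eps (n : ℕ) (s : ℝ) : ℝ := (⌈(n : ℝ) * s⌉ : ℝ) / n

/-- Discrete integral `J_s^t(f;h)` of a two-parameter process `f` against the
increments `h k = h_{t_k t_{k+1}}` along the uniform `n`-partition. -/
def Jtwo (n : ℕ) (f : ℝ → ℝ → Ω → ℝ) (h : ℕ → Ω → ℝ) (s t : ℝ) (ω : Ω) : ℝ :=
  ∑ k ∈ Finset.range n,
    if s ≤ (k : ℝ) / n ∧ (k : ℝ) / n < t then f (eps n s) ((k : ℝ) / n) ω * h k ω else 0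

/-- Discrete integral `J_s^t(y;h)` of a one-parameter path `y`. -/
def Jone (n : ℕ) (y : ℝ → Ω → ℝ) (h : ℕ → Ω → ℝ) (s t : ℝ) (ω : Ω) : ℝ :=
  ∑ k ∈ Finset.range n,
    if s ≤ (k : ℝ) / n ∧ (k : ℝ) / n < t then (y ((k : ℝ) / n) ω - y (eps n s) ω) * h k ω else 0

/-- A scalar `(L_p, ν, ℓ)`-rough path over the continuous process `X`. -/
def IsRoughPath (P : Measure Ω) (p : ℝ≥0∞) (ν : ℝ) (ℓ : ℕ) (C : ℝ)
    (X : ℝ → Ω → ℝ) (x : ℕ → ℝ → ℝ → Ω → ℝ) : Prop :=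
  (∀ i s t, Measurable (x i s t)) ∧
  (∀ ω, ContinuousOn (fun t => X t ω) (Set.Icc 0 1)) ∧
  (∀ s t ω, x 0 s t ω = 1) ∧
  (∀ s t ω, x 1 s t ω = X t ω - X s ω) ∧
  (∀ k, 1 ≤ k → k ≤ ℓ - 1 → ∀ s u t : ℝ, 0 ≤ s → s ≤ u → u ≤ t → t ≤ 1 → ∀ ω,
    x k s t ω = ∑ j ∈ Finset.range (k + 1), x (k - j) s u ω * x j u t ω) ∧
  (∀ k, k ≤ ℓ - 1 → ∀ s t : ℝ, 0 ≤ s → s ≤ t → t ≤ 1 →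
    eLpNorm (x k s t) p P ≤ ENNReal.ofReal ((C * (t - s) ^ ν) ^ k))

/-- `(y^{(0)},…,y^{(ℓ-1)})` is controlled by the rough path `x` in `L₂`,
with remainder constant `K₀`. -/
def Controlled (P : Measure Ω) (ν : ℝ) (ℓ : ℕ) (K₀ : ℝ)
    (x : ℕ → ℝ → ℝ → Ω → ℝ) (y : ℕ → ℝ → Ω → ℝ) : Prop :=
  (∀ k, k ≤ ℓ - 1 → ∀ t, Measurable (y k t)) ∧
  (∀ k, k ≤ ℓ - 1 → ∀ ω, ContinuousOn (fun t => y k t ω) (Set.Icc 0 1)) ∧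
  (∀ ω, y 0 0 ω = 0) ∧
  (∀ k, k ≤ ℓ - 1 → ∀ s t : ℝ, 0 ≤ s → s ≤ t → t ≤ 1 →
    eLpNorm (fun ω => y k t ω - y k s ω -
        ∑ j ∈ Finset.Icc 1 (ℓ - 1 - k), y (k + j) s ω * x j s t ω) 2 P
      ≤ ENNReal.ofReal (K₀ * (t - s) ^ (((ℓ - k : ℕ) : ℝ) * ν)))

/-- Covariance of one-dimensional fractional Brownian motion. -/
def fbmCov (ν s t : ℝ) : ℝ := (s ^ (2 * ν) + t ^ (2 * ν) - |t - s| ^ (2 * ν)) / 2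

/-- `x` is a fractional Brownian motion with Hurst parameter `ν` on `[0,1]`:
a measurable process with (a.s.) continuous sample paths all of whose finite
linear combinations are centered Gaussian with the fBm covariance. -/
def IsFBM (P : Measure Ω) (ν : ℝ) (x : ℝ → Ω → ℝ) : Prop :=
  (∀ t, Measurable (x t)) ∧
  (∀ᵐ ω ∂P, ContinuousOn (fun t => x t ω) (Set.Icc 0 1)) ∧
  ∀ (m : ℕ) (t : Fin m → ℝ), (∀ j, t j ∈ Set.Icc (0 : ℝ) 1) →
    ∀ a : Fin m → ℝ,
      P.map (fun ω => ∑ j, a j * x (t j) ω) =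
        gaussianReal 0 (∑ j, ∑ k, a j * a k * fbmCov ν (t j) (t k)).toNNReal

/-- Correlation function of the increments of fBm. -/
def rho (ν : ℝ) (k : ℤ) : ℝ :=
  (|(k : ℝ) + 1| ^ (2 * ν) + |(k : ℝ) - 1| ^ (2 * ν) - 2 * |(k : ℝ)| ^ (2 * ν)) / 2

/-- Hermite polynomial `H_q` (probabilists' normalization). -/
def Hq (q : ℕ) (t : ℝ) : ℝ := Polynomial.aeval t (Polynomial.hermite q)

/-- The increments `h^{n,q}_{t_k t_{k+1}} = H_q(n^ν δx_{t_k t_{k+1}})`. -/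
def hermIncr (x : ℝ → Ω → ℝ) (ν : ℝ) (n q : ℕ) (k : ℕ) (ω : Ω) : ℝ :=
  Hq q ((n : ℝ) ^ ν * (x (((k : ℝ) + 1) / n) ω - x ((k : ℝ) / n) ω))

/-- Canonical rough-path lift of a one-dimensional process: `x^i_{st} = (δx_{st})^i / i!`. -/
def xlift (x : ℝ → Ω → ℝ) (i : ℕ) (s t : ℝ) (ω : Ω) : ℝ :=
  (x t ω - x s ω) ^ i / (Nat.factorial i : ℝ)

/-- Hermite coefficient `a_q = (1/q!) ∫ f H_q dγ` of `f` in `L²(γ)`. -/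
def hermCoeff (f : ℝ → ℝ) (q : ℕ) : ℝ :=
  (Nat.factorial q : ℝ)⁻¹ * ∫ t, f t * Hq q t ∂(gaussianReal 0 1)

/-- `c_p = E|N|^p = 2^{p/2} Γ((p+1)/2)/√π`. -/
def cconst (r : ℝ) : ℝ := (2 : ℝ) ^ (r / 2) * Real.Gamma ((r + 1) / 2) / Real.sqrt Real.pi

set_option linter.unusedSectionVars false

/-! ### Random variables with moments of all orders -/

/-- A random variable with finite moments of every order. -/
def AllMom {Ω : Type*} [MeasurableSpace Ω] (P : Measure Ω) (f : Ω → ℝ) : Prop :=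
  ∀ n : ℕ, MemLp f n P

section AllMom

variable {Ω : Type*} [MeasurableSpace Ω] {P : Measure Ω} {f g : Ω → ℝ}

lemma AllMom.add (hf : AllMom P f) (hg : AllMom P g) : AllMom P (fun ω => f ω + g ω) :=
  fun n => (hf n).add (hg n)

lemma AllMom.sub (hf : AllMom P f) (hg : AllMom P g) : AllMom P (fun ω => f ω - g ω) :=
  fun n => (hf n).sub (hg n)

lemma AllMom.const_mul (hf : AllMom P f) (c : ℝ) : AllMom P (fun ω => c * f ω) :=
  fun n => (hf n).const_mul c

lemma AllMom.const [IsFiniteMeasure P] (c : ℝ) : AllMom P (fun _ => c) :=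
  fun _ => memLp_const c

lemma AllMom.mul (hf : AllMom P f) (hg : AllMom P g) : AllMom P (fun ω => f ω * g ω) := by
  intro n
  have : ENNReal.HolderTriple ((2 * n : ℕ) : ℝ≥0∞) ((2 * n : ℕ) : ℝ≥0∞) (n : ℝ≥0∞) := by
    refine ⟨?_⟩
    push_cast
    rw [ENNReal.mul_inv (by simp) (by simp), ← add_mul, ENNReal.inv_two_add_inv_two, one_mul]
  exact (hg (2 * n)).mul' (hf (2 * n))

lemma AllMom.pow [IsFiniteMeasure P] (hf : AllMom P f) (k : ℕ) :
    AllMom P (fun ω => f ω ^ k) := by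
  induction k with
  | zero => simpa using AllMom.const 1
  | succ k ih => simpa [pow_succ] using ih.mul hf

lemma AllMom.integrable (hf : AllMom P f) : Integrable f P := by
  have := hf 1
  rw [Nat.cast_one] at this
  exact memLp_one_iff_integrable.1 this

lemma AllMom.memLp_two (hf : AllMom P f) : MemLp f 2 P := by
  have := hf 2
  simpa using this

lemma AllMom.sum {ι : Type*} (s : Finset ι) {F : ι → Ω → ℝ} (h : ∀ i ∈ s, AllMom P (F i)) :
    AllMom P (fun ω => ∑ i ∈ s, F i ω) :=
  fun n => memLp_finsetSum s fun i hi => h i hi n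

end AllMom

/-! ### Hermite polynomials and one-dimensional Gaussian integration by parts -/

lemma derivative_hermite' (n : ℕ) :
    Polynomial.derivative (Polynomial.hermite n) = (n : Polynomial ℤ) * Polynomial.hermite (n - 1) := by
  induction n with
  | zero => simp
  | succ n ih =>
    rw [Polynomial.hermite_succ, Polynomial.derivative_sub, Polynomial.derivative_mul, ih,
      Polynomial.derivative_X]
    cases n with
    | zero => simp
    | succ m =>
      have h2 := Polynomial.hermite_succ m
      simp only [Nat.add_sub_cancel] at *
      rw [Polynomial.derivative_natCast_mul]
      push_cast
      rw [h2]
      ring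

lemma Hq_zero (t : ℝ) : Hq 0 t = 1 := by simp [Hq]

lemma Hq_succ (n : ℕ) (t : ℝ) : Hq (n + 1) t = t * Hq n t - n * Hq (n - 1) t := by
  simp [Hq, Polynomial.hermite_succ, derivative_hermite']

lemma hasDerivAt_Hq (n : ℕ) (t : ℝ) : HasDerivAt (Hq n) (n * Hq (n - 1) t) t := by
  have := Polynomial.hasDerivAt_aeval (Polynomial.hermite n) t
  rw [derivative_hermite'] at this
  exact this.congr_deriv (by simp [Hq])

lemma continuous_Hq (n : ℕ) : Continuous (Hq n) :=
  continuous_iff_continuousAt.2 fun t => (hasDerivAt_Hq n t).continuousAt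

lemma AllMom.Hq_comp {Ω : Type*} [MeasurableSpace Ω] {P : Measure Ω} [IsFiniteMeasure P]
    {f : Ω → ℝ} (hf : AllMom P f) (n : ℕ) : AllMom P (fun ω => Hq n (f ω)) := by
  induction n using Nat.strong_induction_on with
  | _ n ih =>
    cases n with
    | zero => simpa [Hq_zero] using AllMom.const 1
    | succ n =>
      simp only [Hq_succ]
      exact (hf.mul (ih n (by omega))).sub ((ih (n - 1) (by omega)).const_mul _)

lemma allMom_id_gaussian : AllMom (gaussianReal 0 1) (fun w : ℝ => w) :=
  fun n => memLp_id_gaussianReal' (n : ℝ≥0∞) (by simp)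

/-- Stein's identity `E[W g(W)] = E[g'(W)]` for the standard Gaussian law. -/
lemma stein_gaussian {g g' : ℝ → ℝ} (hd : ∀ w, HasDerivAt g (g' w) w)
    (hg : Integrable g (gaussianReal 0 1))
    (hg' : Integrable (fun w => w * g w - g' w) (gaussianReal 0 1)) :
    ∫ w, (w * g w - g' w) ∂(gaussianReal 0 1) = 0 := by
  have hintg : ∀ {f : ℝ → ℝ}, Integrable f (gaussianReal 0 1) →
      Integrable (fun w => gaussianPDFReal 0 1 w * f w) := by
    intro f hf
    rw [gaussianReal_of_var_ne_zero _ one_ne_zero,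
      integrable_withDensity_iff_integrable_smul' (measurable_gaussianPDF _ _)
      (ae_of_all _ fun _ => gaussianPDF_lt_top)] at hf
    simpa using hf
  rw [integral_gaussianReal_eq_integral_smul one_ne_zero]
  have hpdf : ∀ w, HasDerivAt (gaussianPDFReal 0 1) (-w * gaussianPDFReal 0 1 w) w := by
    intro w
    rw [gaussianPDFReal_def]
    have h1 : HasDerivAt (fun x : ℝ => -(x - 0) ^ 2 / (2 * ((1 : ℝ≥0) : ℝ))) (-w) w := by
      have := (((hasDerivAt_id w).sub_const 0).pow 2).neg.div_const (2 * ((1 : ℝ≥0) : ℝ))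
      convert! this using 1
      simp
      ring
    convert! (h1.exp.const_mul ((√(2 * Real.pi * ((1 : ℝ≥0) : ℝ)))⁻¹)) using 1
    ring
  have key := integral_eq_zero_of_hasDerivAt_of_integrable
    (f := fun w => gaussianPDFReal 0 1 w * g w)
    (f' := fun w => -(gaussianPDFReal 0 1 w * (w * g w - g' w)))
    (fun w => by
      have := (hpdf w).mul (hd w)
      convert! this using 1
      ring)
    (hintg hg').neg (hintg hg)
  rw [integral_neg] at key
  simpa using key

/-- Gaussian integration by parts against Hermite polynomials: `E[H_{p+1}(W) f(W)]` equals
`E[H_p(W) f'(W)]`. Both sides are kept under one integral. -/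
lemma stein_hermite {f f' : ℝ → ℝ} (p : ℕ) (hd : ∀ w, HasDerivAt f (f' w) w)
    (hf : AllMom (gaussianReal 0 1) f) (hf' : AllMom (gaussianReal 0 1) f') :
    ∫ w, (Hq (p + 1) w * f w - Hq p w * f' w) ∂(gaussianReal 0 1) = 0 := by
  have hW := allMom_id_gaussian
  have hH := fun p => hW.Hq_comp p
  have e : ∀ w, Hq (p + 1) w * f w - Hq p w * f' w =
      w * (Hq p w * f w) - (p * Hq (p - 1) w * f w + Hq p w * f' w) := by
    intro w; rw [Hq_succ]; ring
  have := stein_gaussian (g := fun w => Hq p w * f w) (g' := fun w => p * Hq (p - 1) w * f w + Hq p w * f' w)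
    (fun w => (hasDerivAt_Hq p w).mul (hd w)) ((hH p).mul hf).integrable
    ((hW.mul ((hH p).mul hf)).sub
      ((((hH (p - 1)).const_mul p).mul hf).add ((hH p).mul hf'))).integrable
  simpa only [e] using this

/-! ### Wick recursion for Gaussian vectors -/

/-- A centred, jointly Gaussian family. -/
def GaussVec {Ω ι : Type*} [MeasurableSpace Ω] (P : Measure Ω) (G : ι → Ω → ℝ) : Prop :=
  HasGaussianLaw (fun ω i => G i ω) P ∧ ∀ i, ∫ ω, G i ω ∂P = 0

section Wick

variable {Ω : Type*} [MeasurableSpace Ω] {P : Measure Ω} [IsProbabilityMeasure P]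

lemma GaussVec.allMom {ι : Type*} [Fintype ι] {G : ι → Ω → ℝ} (h : GaussVec P G) (i : ι) :
    AllMom P (G i) := fun _ => (h.1.eval i).memLp (by simp)

lemma GaussVec.reindex {ι κ : Type*} [Fintype ι] [Fintype κ] {G : ι → Ω → ℝ}
    (h : GaussVec P G) (σ : κ → ι) : GaussVec P (fun k => G (σ k)) := by
  refine ⟨?_, fun k => h.2 _⟩
  exact h.1.map_fun (ContinuousLinearMap.pi fun k => ContinuousLinearMap.proj (σ k))

/-- Mixed moments `E[U^i V^j H_p(W) H_r(Z)]` of a four-dimensional random vector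
`(U, V, W, Z)`. -/
def mixMom (P : Measure Ω) (G : Fin 4 → Ω → ℝ) (i j p r : ℕ) : ℝ :=
  ∫ ω, G 0 ω ^ i * G 1 ω ^ j * Hq p (G 2 ω) * Hq r (G 3 ω) ∂P

/-- Contracting the Hermite factor `H_{p+1}(W)` with the three other factors. The vector is
split as `c W + Y` with `Y` independent of `W`, and Stein's identity is applied in the
variable `W` for frozen `Y`. -/
lemma mixMom_step {G : Fin 4 → Ω → ℝ} (h : GaussVec P G) (hW : ∫ ω, G 2 ω * G 2 ω ∂P = 1)
    (i j p r : ℕ) :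
    mixMom P G i j (p + 1) r =
      i * (∫ ω, G 0 ω * G 2 ω ∂P) * mixMom P G (i - 1) j p r
      + j * (∫ ω, G 1 ω * G 2 ω ∂P) * mixMom P G i (j - 1) p r
      + r * (∫ ω, G 3 ω * G 2 ω ∂P) * mixMom P G i j p (r - 1) := by
  have hA := h.allMom
  set c : Fin 4 → ℝ := fun k => ∫ ω, G k ω * G 2 ω ∂P with hc
  let Y : Fin 4 → Ω → ℝ := fun k ω => G k ω - c k * G 2 ω
  have hYA : ∀ k, AllMom P (Y k) := fun k => (hA k).sub ((hA 2).const_mul _)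
  have hYint : ∀ k, ∫ ω, G 2 ω * Y k ω ∂P = 0 := by
    intro k
    have e : ∀ ω, G 2 ω * Y k ω = G k ω * G 2 ω - c k * (G 2 ω * G 2 ω) := by
      intro ω; simp only [Y]; ring
    simp only [e]
    rw [integral_sub ((hA k).mul (hA 2)).integrable
      (((hA 2).mul (hA 2)).const_mul (c k)).integrable, integral_const_mul, hW]
    simp [hc]
  have hpair : HasGaussianLaw (fun ω => (fun _ : Unit => G 2 ω, fun k => Y k ω)) P := by
    have := h.1.map_fun ((ContinuousLinearMap.pi fun _ : Unit =>
      (ContinuousLinearMap.proj 2 : (Fin 4 → ℝ) →L[ℝ] ℝ)).prod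
      (ContinuousLinearMap.pi fun k : Fin 4 =>
        (ContinuousLinearMap.proj k : (Fin 4 → ℝ) →L[ℝ] ℝ) - c k • ContinuousLinearMap.proj 2))
    convert! this using 1
  have hind : IndepFun (G 2) (fun ω k => Y k ω) P := by
    have h0 := HasGaussianLaw.indepFun_of_covariance_eval (X := fun _ : Unit => G 2) (Y := Y) hpair
      (by
        intro _ k
        rw [covariance_eq_sub (hA 2).memLp_two (hYA k).memLp_two]
        have : ∫ ω, (G 2 * Y k) ω ∂P = 0 := hYint k
        rw [this, h.2 2]; simp)
    exact h0.comp (φ := fun u : Unit → ℝ => u ()) (ψ := id) (by fun_prop) measurable_id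
  have hWm : AEMeasurable (G 2) P := (h.1.eval 2).aemeasurable
  have hYm : AEMeasurable (fun ω k => Y k ω) P := hpair.snd.aemeasurable
  have hlaw : P.map (G 2) = gaussianReal 0 1 := by
    have := (h.1.eval 2).map_eq_gaussianReal
    rw [h.2 2, variance_eq_sub (hA 2).memLp_two, h.2 2] at this
    have e : ∫ ω, (G 2 ^ 2) ω ∂P = 1 := by
      rw [← hW]; congr 1; ext ω; simp [pow_two]
    rw [e] at this
    simpa using this
  let f : (Fin 4 → ℝ) → ℝ → ℝ := fun y w =>
    (y 0 + c 0 * w) ^ i * (y 1 + c 1 * w) ^ j * Hq r (y 3 + c 3 * w)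
  let f' : (Fin 4 → ℝ) → ℝ → ℝ := fun y w =>
    ((i * (y 0 + c 0 * w) ^ (i - 1) * c 0) * (y 1 + c 1 * w) ^ j +
      (y 0 + c 0 * w) ^ i * (j * (y 1 + c 1 * w) ^ (j - 1) * c 1)) * Hq r (y 3 + c 3 * w) +
    (y 0 + c 0 * w) ^ i * (y 1 + c 1 * w) ^ j * (r * Hq (r - 1) (y 3 + c 3 * w) * c 3)
  have hlin : ∀ (y : Fin 4 → ℝ) k w, HasDerivAt (fun w => y k + c k * w) (c k) w := by
    intro y k w
    simpa using ((hasDerivAt_id w).const_mul (c k)).const_add (y k)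
  have hfd : ∀ y w, HasDerivAt (f y) (f' y w) w := by
    intro y w
    exact (((hlin y 0 w).pow i).mul ((hlin y 1 w).pow j)).mul
      ((hasDerivAt_Hq r _).comp w (hlin y 3 w))
  have hγ := allMom_id_gaussian
  have hlinA : ∀ (y : Fin 4 → ℝ) k, AllMom (gaussianReal 0 1) (fun w => y k + c k * w) :=
    fun y k => (AllMom.const _).add (hγ.const_mul _)
  have hfA : ∀ y, AllMom (gaussianReal 0 1) (f y) := fun y =>
    (((hlinA y 0).pow i).mul ((hlinA y 1).pow j)).mul ((hlinA y 3).Hq_comp r)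
  have hmc : ∀ {μ : Measure ℝ} {g : ℝ → ℝ} (a : ℝ), AllMom μ g → AllMom μ (fun w => g w * a) := by
    intro μ g a hg
    simpa [mul_comm] using hg.const_mul a
  have hfA' : ∀ y, AllMom (gaussianReal 0 1) (f' y) := fun y =>
    (((hmc _ (((hlinA y 0).pow (i - 1)).const_mul i)).mul ((hlinA y 1).pow j)).add
      (((hlinA y 0).pow i).mul (hmc _ (((hlinA y 1).pow (j - 1)).const_mul j)))).mul
        ((hlinA y 3).Hq_comp r) |>.add
      ((((hlinA y 0).pow i).mul ((hlinA y 1).pow j)).mul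
        (hmc _ (((hlinA y 3).Hq_comp (r - 1)).const_mul r)))
  let D : ℝ × (Fin 4 → ℝ) → ℝ := fun z => Hq (p + 1) z.1 * f z.2 z.1 - Hq p z.1 * f' z.2 z.1
  have hDc : Continuous D := by
    have := continuous_Hq
    have h1 := this (p + 1)
    have h2 := this p
    have h3 := this r
    have h4 := this (r - 1)
    fun_prop
  -- the value of `D` along the Gaussian vector
  have hGY : ∀ k ω, Y k ω + c k * G 2 ω = G k ω := by intro k ω; simp [Y]
  have hDω : ∀ ω, D (G 2 ω, fun k => Y k ω) =
      G 0 ω ^ i * G 1 ω ^ j * Hq (p + 1) (G 2 ω) * Hq r (G 3 ω)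
      - (i * c 0 * (G 0 ω ^ (i - 1) * G 1 ω ^ j * Hq p (G 2 ω) * Hq r (G 3 ω))
      + j * c 1 * (G 0 ω ^ i * G 1 ω ^ (j - 1) * Hq p (G 2 ω) * Hq r (G 3 ω))
      + r * c 3 * (G 0 ω ^ i * G 1 ω ^ j * Hq p (G 2 ω) * Hq (r - 1) (G 3 ω))) := by
    intro ω
    simp only [D, f, f', hGY]
    ring
  have hM : ∀ i j p r, AllMom P
      (fun ω => G 0 ω ^ i * G 1 ω ^ j * Hq p (G 2 ω) * Hq r (G 3 ω)) := fun i j p r =>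
    ((((hA 0).pow i).mul ((hA 1).pow j)).mul ((hA 2).Hq_comp p)).mul ((hA 3).Hq_comp r)
  have hDint : Integrable (fun ω => D (G 2 ω, fun k => Y k ω)) P := by
    simp only [hDω]
    exact ((hM _ _ _ _).sub ((((hM _ _ _ _).const_mul _).add ((hM _ _ _ _).const_mul _)).add
      ((hM _ _ _ _).const_mul _))).integrable
  have hD0 : ∫ ω, D (G 2 ω, fun k => Y k ω) ∂P = 0 := by
    have hm : AEMeasurable (fun ω => (G 2 ω, fun k => Y k ω)) P := hWm.prodMk hYm
    have hprod := (indepFun_iff_map_prod_eq_prod_map_map hWm hYm).1 hind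
    have hDint' : Integrable D (P.map (fun ω => (G 2 ω, fun k => Y k ω))) :=
      (integrable_map_measure hDc.aestronglyMeasurable hm).2 hDint
    rw [← integral_map (f := D) hm hDc.aestronglyMeasurable]
    rw [hprod, hlaw] at hDint' ⊢
    have : IsProbabilityMeasure (P.map (fun ω k => Y k ω)) := Measure.isProbabilityMeasure_map hYm
    rw [integral_prod_symm _ hDint']
    have : ∀ y, ∫ w, D (w, y) ∂(gaussianReal 0 1) = 0 := fun y =>
      stein_hermite p (hfd y) (hfA y) (hfA' y)
    simp [this]
  simp only [hDω] at hD0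
  rw [integral_sub (hM _ _ _ _).integrable (((((hM _ _ _ _).const_mul _).add
    ((hM _ _ _ _).const_mul _)).add ((hM _ _ _ _).const_mul _)).integrable),
    integral_add (((hM _ _ _ _).const_mul _).add ((hM _ _ _ _).const_mul _)).integrable
      ((hM _ _ _ _).const_mul _).integrable,
    integral_add ((hM _ _ _ _).const_mul _).integrable ((hM _ _ _ _).const_mul _).integrable,
    integral_const_mul, integral_const_mul, integral_const_mul] at hD0
  unfold mixMom
  linarith

end Wick

/-! ### Moment bounds from the Wick recursion -/

/-- The relations satisfied by the mixed moments `M i j p r = E[U^i V^j H_p(W) H_r(Z)]` of a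
Gaussian vector, where `a = E[UW]`, `b = E[VW]`, `c = E[UZ]`, `d = E[VZ]`, `ρ = E[WZ]` are all
at most `1` in absolute value, and `T ≥ 1` dominates the standard deviations of `U` and `V`. -/
structure MomRec (M : ℕ → ℕ → ℕ → ℕ → ℝ) (a b c d ρ T : ℝ) (β : ℕ → ℕ → ℝ) : Prop where
  left : ∀ i j p r, M i j (p + 1) r =
    i * a * M (i - 1) j p r + j * b * M i (j - 1) p r + r * ρ * M i j p (r - 1)
  right : ∀ i j r, M i j 0 (r + 1) = i * c * M (i - 1) j 0 r + j * d * M i (j - 1) 0 r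
  zero : M 0 0 0 0 = 1
  base : ∀ i j, |M i j 0 0| ≤ β i j * T ^ (i + j)
  ha : |a| ≤ 1
  hb : |b| ≤ 1
  hc : |c| ≤ 1
  hd : |d| ≤ 1
  hρ : |ρ| ≤ 1
  hT : 1 ≤ T

/-- One term of the recursion. The bound `|x| ≤ B` is only available for `i ≠ 0`, since the
moment of index `i - 1` is junk at `i = 0`; there the factor `i` vanishes. -/
lemma abs_nat_mul_le {i : ℕ} {a x B : ℝ} (ha : |a| ≤ 1) (hx : i ≠ 0 → |x| ≤ B) :
    |(i : ℝ) * a * x| ≤ i * B := by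
  rcases Nat.eq_zero_or_pos i with rfl | hi
  · simp
  · rw [abs_mul, abs_mul, Nat.abs_cast]
    have h1 := hx (by omega)
    have h2 := abs_nonneg x
    have h3 : (0 : ℝ) ≤ i := Nat.cast_nonneg _
    calc (i : ℝ) * |a| * |x| ≤ i * 1 * B := by gcongr
      _ = i * B := by ring

/-- Crude growth bound: each of `U`, `V` contributes a factor of at most `T`. -/
lemma MomRec.bound (β : ℕ → ℕ → ℝ) (hβ : ∀ i j, 0 ≤ β i j) (p r i j : ℕ) :
    ∃ C : ℝ, 0 ≤ C ∧ ∀ M a b c d ρ T, MomRec M a b c d ρ T β → |M i j p r| ≤ C * T ^ (i + j) := by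
  have mono : ∀ {T : ℝ} {m n : ℕ} {C : ℝ}, 1 ≤ T → m ≤ n → 0 ≤ C → C * T ^ m ≤ C * T ^ n :=
    fun hT hmn hC => mul_le_mul_of_nonneg_left (pow_le_pow_right₀ hT hmn) hC
  induction p generalizing i j r with
  | zero =>
    induction r generalizing i j with
    | zero => exact ⟨β i j, hβ i j, fun M a b c d ρ T h => h.base i j⟩
    | succ r ih =>
      obtain ⟨C1, h1, k1⟩ := ih (i - 1) j
      obtain ⟨C2, h2, k2⟩ := ih i (j - 1)
      refine ⟨i * C1 + j * C2, by positivity, fun M a b c d ρ T h => ?_⟩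
      rw [h.right]
      have e1 := abs_nat_mul_le (i := i) (x := M (i - 1) j 0 r) (B := C1 * T ^ (i + j)) h.hc
        fun _ => (k1 M a b c d ρ T h).trans (mono h.hT (by omega) h1)
      have e2 := abs_nat_mul_le (i := j) (x := M i (j - 1) 0 r) (B := C2 * T ^ (i + j)) h.hd
        fun _ => (k2 M a b c d ρ T h).trans (mono h.hT (by omega) h2)
      refine (abs_add_le _ _).trans ((add_le_add e1 e2).trans (le_of_eq (by ring)))
  | succ p ih =>
    obtain ⟨C1, h1, k1⟩ := ih r (i - 1) j
    obtain ⟨C2, h2, k2⟩ := ih r i (j - 1)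
    obtain ⟨C3, h3, k3⟩ := ih (r - 1) i j
    refine ⟨i * C1 + j * C2 + r * C3, by positivity, fun M a b c d ρ T h => ?_⟩
    rw [h.left]
    have e1 := abs_nat_mul_le (i := i) (x := M (i - 1) j p r) (B := C1 * T ^ (i + j)) h.ha
      fun _ => (k1 M a b c d ρ T h).trans (mono h.hT (by omega) h1)
    have e2 := abs_nat_mul_le (i := j) (x := M i (j - 1) p r) (B := C2 * T ^ (i + j)) h.hb
      fun _ => (k2 M a b c d ρ T h).trans (mono h.hT (by omega) h2)
    have e3 := abs_nat_mul_le (i := r) (x := M i j p (r - 1)) (B := C3 * T ^ (i + j)) h.hρ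
      fun _ => k3 M a b c d ρ T h
    refine (abs_add_le _ _).trans ((add_le_add ((abs_add_le _ _).trans (add_le_add e1 e2)) e3).trans
      (le_of_eq (by ring)))

/-- If the Hermite degrees are at least the polynomial degrees, then either all factors are
contracted without using `ρ` (only possible if the degrees agree), or a factor `ρ` appears. -/
lemma MomRec.bound_rho (β : ℕ → ℕ → ℝ) (hβ : ∀ i j, 0 ≤ β i j) (p r i j : ℕ) (hij : i + j ≤ p + r) :
    ∃ C : ℝ, 0 ≤ C ∧ ∀ M a b c d ρ T, MomRec M a b c d ρ T β →
      |M i j p r| ≤ C * ((if i + j = p + r then 1 else 0) + |ρ| * T ^ (i + j)) := by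
  have mono : ∀ {T x δ δ' : ℝ} {m n : ℕ} {C : ℝ}, 1 ≤ T → m ≤ n → 0 ≤ C → 0 ≤ x → δ ≤ δ' →
      C * (δ + x * T ^ m) ≤ C * (δ' + x * T ^ n) :=
    fun hT hmn hC hx hδ => mul_le_mul_of_nonneg_left (add_le_add hδ
      (mul_le_mul_of_nonneg_left (pow_le_pow_right₀ hT hmn) hx)) hC
  have ite_le : ∀ {A B : Prop} [Decidable A] [Decidable B], (A → B) →
      (if A then (1 : ℝ) else 0) ≤ if B then 1 else 0 := by
    intro A B _ _ h
    split_ifs <;> first | simp | tauto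
  induction p generalizing i j r with
  | zero =>
    induction r generalizing i j with
    | zero =>
      obtain ⟨rfl, rfl⟩ : i = 0 ∧ j = 0 := by omega
      refine ⟨1, by norm_num, fun M a b c d ρ T h => ?_⟩
      rw [h.zero]; simp
    | succ r ih =>
      have ih1 : ∃ C : ℝ, 0 ≤ C ∧ ∀ M a b c d ρ T, MomRec M a b c d ρ T β → i ≠ 0 →
          |M (i - 1) j 0 r| ≤ C * ((if i + j = 0 + (r + 1) then 1 else 0) + |ρ| * T ^ (i + j)) := by
        rcases Nat.eq_zero_or_pos i with h0 | h0
        · exact ⟨0, le_rfl, fun _ _ _ _ _ _ _ _ hi => absurd h0 hi⟩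
        · obtain ⟨C, h1, k⟩ := ih (i - 1) j (by omega)
          exact ⟨C, h1, fun M a b c d ρ T h _ => (k M a b c d ρ T h).trans
            (mono h.hT (by omega) h1 (abs_nonneg _) (ite_le (by omega)))⟩
      have ih2 : ∃ C : ℝ, 0 ≤ C ∧ ∀ M a b c d ρ T, MomRec M a b c d ρ T β → j ≠ 0 →
          |M i (j - 1) 0 r| ≤ C * ((if i + j = 0 + (r + 1) then 1 else 0) + |ρ| * T ^ (i + j)) := by
        rcases Nat.eq_zero_or_pos j with h0 | h0
        · exact ⟨0, le_rfl, fun _ _ _ _ _ _ _ _ hi => absurd h0 hi⟩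
        · obtain ⟨C, h1, k⟩ := ih i (j - 1) (by omega)
          exact ⟨C, h1, fun M a b c d ρ T h _ => (k M a b c d ρ T h).trans
            (mono h.hT (by omega) h1 (abs_nonneg _) (ite_le (by omega)))⟩
      obtain ⟨C1, h1, k1⟩ := ih1
      obtain ⟨C2, h2, k2⟩ := ih2
      refine ⟨i * C1 + j * C2, by positivity, fun M a b c d ρ T h => ?_⟩
      rw [h.right]
      have e1 := abs_nat_mul_le (i := i) h.hc (k1 M a b c d ρ T h)
      have e2 := abs_nat_mul_le (i := j) h.hd (k2 M a b c d ρ T h)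
      refine (abs_add_le _ _).trans ((add_le_add e1 e2).trans (le_of_eq (by ring)))
  | succ p ih =>
    have ih1 : ∃ C : ℝ, 0 ≤ C ∧ ∀ M a b c d ρ T, MomRec M a b c d ρ T β → i ≠ 0 →
        |M (i - 1) j p r| ≤ C * ((if i + j = p + 1 + r then 1 else 0) + |ρ| * T ^ (i + j)) := by
      rcases Nat.eq_zero_or_pos i with h0 | h0
      · exact ⟨0, le_rfl, fun _ _ _ _ _ _ _ _ hi => absurd h0 hi⟩
      · obtain ⟨C, h1, k⟩ := ih r (i - 1) j (by omega)
        exact ⟨C, h1, fun M a b c d ρ T h _ => (k M a b c d ρ T h).trans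
          (mono h.hT (by omega) h1 (abs_nonneg _) (ite_le (by omega)))⟩
    have ih2 : ∃ C : ℝ, 0 ≤ C ∧ ∀ M a b c d ρ T, MomRec M a b c d ρ T β → j ≠ 0 →
        |M i (j - 1) p r| ≤ C * ((if i + j = p + 1 + r then 1 else 0) + |ρ| * T ^ (i + j)) := by
      rcases Nat.eq_zero_or_pos j with h0 | h0
      · exact ⟨0, le_rfl, fun _ _ _ _ _ _ _ _ hi => absurd h0 hi⟩
      · obtain ⟨C, h1, k⟩ := ih r i (j - 1) (by omega)
        exact ⟨C, h1, fun M a b c d ρ T h _ => (k M a b c d ρ T h).trans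
          (mono h.hT (by omega) h1 (abs_nonneg _) (ite_le (by omega)))⟩
    obtain ⟨C1, h1, k1⟩ := ih1
    obtain ⟨C2, h2, k2⟩ := ih2
    obtain ⟨C3, h3, k3⟩ := MomRec.bound β hβ p (r - 1) i j
    refine ⟨i * C1 + j * C2 + r * C3, by positivity, fun M a b c d ρ T h => ?_⟩
    rw [h.left]
    have e1 := abs_nat_mul_le (i := i) h.ha (k1 M a b c d ρ T h)
    have e2 := abs_nat_mul_le (i := j) h.hb (k2 M a b c d ρ T h)
    have e3 : |(r : ℝ) * ρ * M i j p (r - 1)| ≤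
        r * (C3 * ((if i + j = p + 1 + r then 1 else 0) + |ρ| * T ^ (i + j))) := by
      rw [abs_mul, abs_mul, Nat.abs_cast, mul_assoc]
      refine mul_le_mul_of_nonneg_left ?_ (Nat.cast_nonneg _)
      have := mul_le_mul_of_nonneg_left (k3 M a b c d ρ T h) (abs_nonneg ρ)
      refine this.trans ?_
      have : (0 : ℝ) ≤ if i + j = p + 1 + r then 1 else 0 := by split_ifs <;> norm_num
      nlinarith [mul_nonneg h3 this]
    refine (abs_add_le _ _).trans ((add_le_add ((abs_add_le _ _).trans (add_le_add e1 e2)) e3).trans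
      (le_of_eq (by ring)))

/-- With matching degrees, the complete contractions `U`–`W` and `V`–`Z` form the main term. -/
lemma MomRec.main_term (β : ℕ → ℕ → ℝ) (hβ : ∀ i j, 0 ≤ β i j) (i j : ℕ) :
    ∃ C : ℝ, 0 ≤ C ∧ ∀ M a b c d ρ T, MomRec M a b c d ρ T β →
      |M i j i j - (i.factorial * a ^ i) * (j.factorial * d ^ j)| ≤ C * (|b| + |ρ| * T ^ (i + j)) := by
  induction i with
  | zero =>
    refine ⟨0, le_rfl, fun M a b c d ρ T h => ?_⟩
    have : ∀ j, M 0 j 0 j = j.factorial * d ^ j := by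
      intro j
      induction j with
      | zero => simp [h.zero]
      | succ j ih =>
        rw [h.right]
        simp only [Nat.add_sub_cancel, ih, Nat.factorial_succ]
        push_cast; ring
    rw [this]; simp
  | succ i ih =>
    obtain ⟨C1, h1, k1⟩ := ih
    have ih2 : ∃ C : ℝ, 0 ≤ C ∧ ∀ M a b c d ρ T, MomRec M a b c d ρ T β → j ≠ 0 →
        |M (i + 1) (j - 1) i j| ≤ C * (1 + |ρ| * T ^ (i + 1 + j)) := by
      rcases Nat.eq_zero_or_pos j with h0 | h0
      · exact ⟨0, le_rfl, fun _ _ _ _ _ _ _ _ hi => absurd h0 hi⟩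
      · obtain ⟨C, h1, k⟩ := MomRec.bound_rho β hβ i j (i + 1) (j - 1) (by omega)
        refine ⟨C, h1, fun M a b c d ρ T h _ => (k M a b c d ρ T h).trans ?_⟩
        have := pow_le_pow_right₀ h.hT (show i + 1 + (j - 1) ≤ i + 1 + j by omega)
        rw [if_pos (by omega)]
        gcongr
    obtain ⟨C2, h2, k2⟩ := ih2
    obtain ⟨C3, h3, k3⟩ := MomRec.bound β hβ i (j - 1) (i + 1) j
    refine ⟨(i + 1) * C1 + j * C2 + j * C3, by positivity, fun M a b c d ρ T h => ?_⟩
    have hT := h.hT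
    have hb := h.hb
    rw [h.left]
    simp only [Nat.add_sub_cancel]
    have e : ((i + 1 : ℕ) : ℝ) * a * M i j i j + j * b * M (i + 1) (j - 1) i j
        + j * ρ * M (i + 1) j i (j - 1) - ((i + 1).factorial * a ^ (i + 1)) * (j.factorial * d ^ j)
        = ((i + 1 : ℕ) : ℝ) * a * (M i j i j - (i.factorial * a ^ i) * (j.factorial * d ^ j))
        + j * b * M (i + 1) (j - 1) i j + j * ρ * M (i + 1) j i (j - 1) := by
      rw [Nat.factorial_succ]; push_cast; ring
    rw [e]
    have hTp := pow_le_pow_right₀ h.hT (show i + j ≤ i + 1 + j by omega)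
    have e1 : |((i + 1 : ℕ) : ℝ) * a * (M i j i j - (i.factorial * a ^ i) * (j.factorial * d ^ j))|
        ≤ ((i + 1 : ℕ) : ℝ) * (C1 * (|b| + |ρ| * T ^ (i + 1 + j))) := by
      refine abs_nat_mul_le h.ha fun _ => (k1 M a b c d ρ T h).trans ?_
      gcongr
    have e2 : |(j : ℝ) * b * M (i + 1) (j - 1) i j| ≤ j * (C2 * (|b| + |ρ| * T ^ (i + 1 + j))) := by
      rcases Nat.eq_zero_or_pos j with h0 | h0
      · simp [h0]
      · rw [abs_mul, abs_mul, Nat.abs_cast, mul_assoc]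
        refine mul_le_mul_of_nonneg_left ?_ (Nat.cast_nonneg _)
        have h5 := mul_le_mul_of_nonneg_left (k2 M a b c d ρ T h (by omega)) (abs_nonneg b)
        refine h5.trans ?_
        have h6 : 0 ≤ |ρ| * T ^ (i + 1 + j) := by positivity
        have h7 := mul_le_mul_of_nonneg_right hb (mul_nonneg h2 h6)
        nlinarith
    have e3 : |(j : ℝ) * ρ * M (i + 1) j i (j - 1)| ≤ j * (C3 * (|b| + |ρ| * T ^ (i + 1 + j))) := by
      rw [abs_mul, abs_mul, Nat.abs_cast, mul_assoc]
      refine mul_le_mul_of_nonneg_left ?_ (Nat.cast_nonneg _)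
      have h5 := mul_le_mul_of_nonneg_left (k3 M a b c d ρ T h) (abs_nonneg ρ)
      refine h5.trans ?_
      nlinarith [mul_nonneg h3 (abs_nonneg b)]
    refine (abs_add_le _ _).trans ((add_le_add ((abs_add_le _ _).trans (add_le_add e1 e2)) e3).trans
      (le_of_eq (by push_cast; ring)))

/-- Each of the `i` contractions pairs one factor `U` with `W`; hence `E[U^i H_i(W)] = i! a^i`. -/
lemma MomRec.mean {M : ℕ → ℕ → ℕ → ℕ → ℝ} {a b c d ρ T : ℝ} {β : ℕ → ℕ → ℝ}
    (h : MomRec M a b c d ρ T β) (i : ℕ) : M i 0 i 0 = i.factorial * a ^ i := by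
  induction i with
  | zero => simp [h.zero]
  | succ i ih =>
    rw [h.left]
    simp only [Nat.add_sub_cancel, ih, Nat.factorial_succ]
    push_cast; ring

/-! ### Moment bounds for Gaussian vectors -/

section WickBounds

variable {Ω : Type*} [MeasurableSpace Ω] {P : Measure Ω} [IsProbabilityMeasure P]

/-- Even moments of the standard Gaussian law. -/
def gaussMom (k : ℕ) : ℝ := ∫ w, w ^ (2 * k) ∂(gaussianReal 0 1)

lemma gaussMom_nonneg (k : ℕ) : 0 ≤ gaussMom k :=
  integral_nonneg fun w => by
    rw [pow_mul]; positivity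

lemma GaussVec.even_moment {ι : Type*} [Fintype ι] {G : ι → Ω → ℝ} (h : GaussVec P G) (i : ι)
    {T : ℝ} (hT : 0 ≤ T) (hv : ∫ ω, G i ω * G i ω ∂P ≤ T ^ 2) (k : ℕ) :
    ∫ ω, G i ω ^ (2 * k) ∂P ≤ gaussMom k * T ^ (2 * k) := by
  have hlaw := (h.1.eval i).map_eq_gaussianReal
  have hm : AEMeasurable (G i) P := (h.1.eval i).aemeasurable
  rw [h.2 i, variance_eq_sub (h.allMom i).memLp_two, h.2 i] at hlaw
  set v : ℝ := ∫ ω, (G i ^ 2) ω ∂P with hvdef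
  have hv' : v = ∫ ω, G i ω * G i ω ∂P := by
    rw [hvdef]; congr 1; ext ω; simp [pow_two]
  have hv0 : 0 ≤ v := by rw [hv']; exact integral_nonneg fun ω => mul_self_nonneg _
  have hscale : (gaussianReal 0 1).map (fun w => √v * w) = gaussianReal 0 v.toNNReal := by
    rw [gaussianReal_map_const_mul]
    congr 1
    · simp
    · ext
      simp [Real.sq_sqrt hv0, hv0]
  have e0 : v - 0 ^ 2 = v := by ring
  rw [e0, ← hscale] at hlaw
  have e1 : ∫ ω, G i ω ^ (2 * k) ∂P = ∫ w, w ^ (2 * k) ∂(P.map (G i)) :=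
    (integral_map (f := fun w : ℝ => w ^ (2 * k)) hm (by fun_prop)).symm
  have e2 : ∫ w, w ^ (2 * k) ∂((gaussianReal 0 1).map (fun w => √v * w))
      = ∫ w, (√v * w) ^ (2 * k) ∂(gaussianReal 0 1) :=
    integral_map (f := fun w : ℝ => w ^ (2 * k)) (by fun_prop) (by fun_prop)
  have hlaw' : P.map (G i) = (gaussianReal 0 1).map (fun w => √v * w) := hlaw
  rw [e1, hlaw', e2]
  simp only [mul_pow]
  rw [integral_const_mul, mul_comm]
  refine mul_le_mul_of_nonneg_left ?_ (gaussMom_nonneg k)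
  refine pow_le_pow_left₀ (Real.sqrt_nonneg _) ?_ _
  rw [← Real.sqrt_sq hT]
  exact Real.sqrt_le_sqrt (hv'.trans_le hv)

/-- Constant in the moment bound `E|U^i V^j| ≤ momConst i j * T ^ (i + j)`. -/
def momConst (i j : ℕ) : ℝ := (gaussMom i + gaussMom j) / 2

lemma momConst_nonneg (i j : ℕ) : 0 ≤ momConst i j := by
  have := gaussMom_nonneg i
  have := gaussMom_nonneg j
  unfold momConst; positivity

lemma mixMom_swap (G : Fin 4 → Ω → ℝ) (i j p r : ℕ) :
    mixMom P (fun k => G (Equiv.swap 2 3 k)) i j p r = mixMom P G i j r p := by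
  unfold mixMom
  congr 1; ext ω
  have e0 : (Equiv.swap (2 : Fin 4) 3) 0 = 0 := by decide
  have e1 : (Equiv.swap (2 : Fin 4) 3) 1 = 1 := by decide
  have e2 : (Equiv.swap (2 : Fin 4) 3) 2 = 3 := by decide
  have e3 : (Equiv.swap (2 : Fin 4) 3) 3 = 2 := by decide
  simp only [e0, e1, e2, e3]
  ring

/-- The mixed moments of a Gaussian vector satisfy the abstract recursion. -/
lemma momRec_mixMom {G : Fin 4 → Ω → ℝ} (h : GaussVec P G) {a b c d ρ T : ℝ} (hT : 1 ≤ T)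
    (hUU : ∫ ω, G 0 ω * G 0 ω ∂P ≤ T ^ 2) (hVV : ∫ ω, G 1 ω * G 1 ω ∂P ≤ T ^ 2)
    (hWW : ∫ ω, G 2 ω * G 2 ω ∂P = 1) (hZZ : ∫ ω, G 3 ω * G 3 ω ∂P = 1)
    (ha : ∫ ω, G 0 ω * G 2 ω ∂P = a) (hb : ∫ ω, G 1 ω * G 2 ω ∂P = b)
    (hc : ∫ ω, G 0 ω * G 3 ω ∂P = c) (hd : ∫ ω, G 1 ω * G 3 ω ∂P = d)
    (hρ : ∫ ω, G 2 ω * G 3 ω ∂P = ρ)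
    (ha1 : |a| ≤ 1) (hb1 : |b| ≤ 1) (hc1 : |c| ≤ 1) (hd1 : |d| ≤ 1) (hρ1 : |ρ| ≤ 1) :
    MomRec (mixMom P G) a b c d ρ T momConst := by
  refine ⟨?_, ?_, ?_, ?_, ha1, hb1, hc1, hd1, hρ1, hT⟩
  · intro i j p r
    have e : ∫ ω, G 3 ω * G 2 ω ∂P = ρ := by rw [← hρ]; simp only [mul_comm]
    rw [mixMom_step h hWW, ha, hb, e]
  · intro i j r
    have hs := mixMom_step (h.reindex (Equiv.swap (2 : Fin 4) 3)) (by
      have e2 : (Equiv.swap (2 : Fin 4) 3) 2 = 3 := by decide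
      simpa only [e2] using hZZ) i j r 0
    have e0 : (Equiv.swap (2 : Fin 4) 3) 0 = 0 := by decide
    have e1 : (Equiv.swap (2 : Fin 4) 3) 1 = 1 := by decide
    have e2 : (Equiv.swap (2 : Fin 4) 3) 2 = 3 := by decide
    simp only [mixMom_swap, e0, e1, e2, hc, hd] at hs
    rw [hs]; simp
  · simp [mixMom, Hq_zero]
  · intro i j
    have hT0 : 0 < T := by linarith
    have hA := h.allMom
    have hpt : ∀ ω, |G 0 ω ^ i * G 1 ω ^ j| ≤
        T ^ (i + j) / (2 * T ^ (2 * i)) * G 0 ω ^ (2 * i) +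
          T ^ (i + j) / (2 * T ^ (2 * j)) * G 1 ω ^ (2 * j) := by
      intro ω
      set u := |G 0 ω| ^ i / T ^ i with hu
      set v := |G 1 ω| ^ j / T ^ j with hv
      have e1 : |G 0 ω ^ i * G 1 ω ^ j| = T ^ (i + j) * (u * v) := by
        rw [abs_mul, abs_pow, abs_pow, hu, hv, pow_add]; field_simp
      have e2 : T ^ (i + j) / (2 * T ^ (2 * i)) * G 0 ω ^ (2 * i) = T ^ (i + j) * (u ^ 2 / 2) := by
        rw [hu, div_pow, ← pow_mul, ← pow_mul, mul_comm i 2, pow_mul |G 0 ω|, sq_abs, ← pow_mul]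
        field_simp
      have e3 : T ^ (i + j) / (2 * T ^ (2 * j)) * G 1 ω ^ (2 * j) = T ^ (i + j) * (v ^ 2 / 2) := by
        rw [hv, div_pow, ← pow_mul, ← pow_mul, mul_comm j 2, pow_mul |G 1 ω|, sq_abs, ← pow_mul]
        field_simp
      rw [e1, e2, e3, ← mul_add]
      refine mul_le_mul_of_nonneg_left ?_ (by positivity)
      nlinarith [sq_nonneg (u - v)]
    have hintg : Integrable (fun ω => T ^ (i + j) / (2 * T ^ (2 * i)) * G 0 ω ^ (2 * i) +
          T ^ (i + j) / (2 * T ^ (2 * j)) * G 1 ω ^ (2 * j)) P :=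
      ((((hA 0).pow _).const_mul _).add (((hA 1).pow _).const_mul _)).integrable
    have hle : |∫ ω, G 0 ω ^ i * G 1 ω ^ j ∂P| ≤ _ :=
      (abs_integral_le_integral_abs).trans
        (integral_mono (((hA 0).pow i).mul ((hA 1).pow j)).integrable.abs hintg hpt)
    have e : mixMom P G i j 0 0 = ∫ ω, G 0 ω ^ i * G 1 ω ^ j ∂P := by simp [mixMom, Hq_zero]
    rw [e]
    refine hle.trans ?_
    rw [integral_add (((hA 0).pow _).const_mul _).integrable (((hA 1).pow _).const_mul _).integrable,
      integral_const_mul, integral_const_mul]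
    have m0 := h.even_moment 0 hT0.le hUU i
    have m1 := h.even_moment 1 hT0.le hVV j
    calc _ ≤ T ^ (i + j) / (2 * T ^ (2 * i)) * (gaussMom i * T ^ (2 * i)) +
          T ^ (i + j) / (2 * T ^ (2 * j)) * (gaussMom j * T ^ (2 * j)) := by gcongr
      _ = momConst i j * T ^ (i + j) := by
        unfold momConst; field_simp

end WickBounds

/-! ### Increments of fractional Brownian motion -/

section FBM

variable {Ω : Type*} [MeasurableSpace Ω] {P : Measure Ω} [IsProbabilityMeasure P]
  {ν : ℝ} {x : ℝ → Ω → ℝ}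

/-- Joint Gaussianity from the laws of all finite linear combinations (Cramér–Wold). -/
lemma IsFBM.gaussVec (hx : IsFBM P ν x) {m : ℕ} (t : Fin m → ℝ)
    (ht : ∀ j, t j ∈ Set.Icc (0 : ℝ) 1) : GaussVec P (fun i => x (t i)) := by
  have hm : Measurable (fun ω i => x (t i) ω) := measurable_pi_lambda _ fun i => hx.1 _
  refine ⟨⟨⟨fun L => ?_⟩⟩, fun i => ?_⟩
  · have hL : ∀ z : Fin m → ℝ, L z = ∑ j, L (Pi.single j 1) * z j := by
      intro z
      conv_lhs => rw [show z = ∑ j, z j • (Pi.single j (1 : ℝ) : Fin m → ℝ) from by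
        ext k; simp [Finset.sum_apply, Pi.single_apply]]
      rw [map_sum]
      exact Finset.sum_congr rfl fun j _ => by rw [map_smul, smul_eq_mul, mul_comm]
    have h2 := hx.2.2 m t ht (fun j => L (Pi.single j 1))
    have h3 : (P.map (fun ω i => x (t i) ω)).map L =
        P.map (fun ω => ∑ j, L (Pi.single j 1) * x (t j) ω) := by
      rw [Measure.map_map L.continuous.measurable hm]
      congr 1; ext ω; exact hL _
    generalize hv : (∑ j, ∑ k, L (Pi.single j 1) * L (Pi.single k 1) * fbmCov ν (t j) (t k)).toNNReal
      = v at h2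
    rw [← h3] at h2
    have hLm : AEMeasurable L (P.map (fun ω i => x (t i) ω)) := L.continuous.measurable.aemeasurable
    have e1 : ∫ z, L z ∂(P.map (fun ω i => x (t i) ω)) = 0 := by
      have := integral_map (f := fun w : ℝ => w) hLm (by fun_prop)
      rw [← this, h2, integral_id_gaussianReal]
    have e2 : Var[L; P.map (fun ω i => x (t i) ω)] = v := by
      have := variance_id_map hLm
      rw [← this, h2, variance_id_gaussianReal]
    rw [e1, e2, h2]; simp
  · have h2 := hx.2.2 1 (fun _ => t i) (fun _ => ht i) (fun _ => 1)
    simp only [Fin.sum_univ_one, one_mul] at h2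
    have := integral_map (f := fun w : ℝ => w) (hx.1 (t i)).aemeasurable (μ := P) (by fun_prop)
    rw [← this, h2, integral_id_gaussianReal]

lemma IsFBM.allMom (hx : IsFBM P ν x) {s : ℝ} (hs : s ∈ Set.Icc (0 : ℝ) 1) : AllMom P (x s) :=
  (hx.gaussVec (fun _ : Fin 1 => s) fun _ => hs).allMom 0

lemma integral_sq_of_map_gaussian {f : Ω → ℝ} (hf : Measurable f) {v : ℝ} (hv : 0 ≤ v)
    (h : P.map f = gaussianReal 0 v.toNNReal) : ∫ ω, f ω ^ 2 ∂P = v := by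
  have h1 := integral_map (f := fun w : ℝ => w ^ 2) hf.aemeasurable (μ := P) (by fun_prop)
  rw [← h1, h]
  have h2 := variance_eq_integral (μ := gaussianReal 0 v.toNNReal) (X := fun w : ℝ => w)
    (by fun_prop)
  rw [variance_fun_id_gaussianReal, integral_id_gaussianReal] at h2
  simpa [hv] using h2.symm

lemma IsFBM.integral_mul (hx : IsFBM P ν x) (hν : 0 < ν) {s t : ℝ} (hs : s ∈ Set.Icc (0 : ℝ) 1)
    (ht : t ∈ Set.Icc (0 : ℝ) 1) : ∫ ω, x s ω * x t ω ∂P = fbmCov ν s t := by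
  have h0 : (0 : ℝ) ^ (2 * ν) = 0 := Real.zero_rpow (by positivity)
  have hself : ∀ {s : ℝ}, s ∈ Set.Icc (0 : ℝ) 1 → ∫ ω, x s ω ^ 2 ∂P = s ^ (2 * ν) := by
    intro s hs
    have h2 := hx.2.2 1 (fun _ => s) (fun _ => hs) (fun _ => 1)
    simp only [Fin.sum_univ_one, one_mul, fbmCov, sub_self, abs_zero, h0] at h2
    rw [integral_sq_of_map_gaussian (v := s ^ (2 * ν)) (hx.1 s) (Real.rpow_nonneg hs.1 _)]
    rw [h2]; congr 2; ring
  have hdiff : ∫ ω, (x t ω - x s ω) ^ 2 ∂P = |t - s| ^ (2 * ν) := by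
    have h2 := hx.2.2 2 ![s, t] (by intro j; fin_cases j <;> simpa) ![-1, 1]
    simp only [Fin.sum_univ_two, Matrix.cons_val_zero, Matrix.cons_val_one, fbmCov, sub_self,
      abs_zero, h0] at h2
    have e : (fun ω => -1 * x s ω + 1 * x t ω) = fun ω => x t ω - x s ω := by ext ω; ring
    rw [e] at h2
    refine integral_sq_of_map_gaussian (f := fun ω => x t ω - x s ω) ((hx.1 t).sub (hx.1 s))
      (Real.rpow_nonneg (abs_nonneg _) _) ?_
    rw [h2, abs_sub_comm s t]; congr 2; ring
  have hAs := hx.allMom hs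
  have hAt := hx.allMom ht
  have e : ∀ ω, (x t ω - x s ω) ^ 2 = x t ω ^ 2 - 2 * (x s ω * x t ω) + x s ω ^ 2 := by
    intro ω; ring
  simp only [e] at hdiff
  rw [integral_add ((hAt.pow 2).sub ((hAs.mul hAt).const_mul 2)).integrable (hAs.pow 2).integrable,
    integral_sub (hAt.pow 2).integrable ((hAs.mul hAt).const_mul 2).integrable,
    integral_const_mul, hself hs, hself ht] at hdiff
  unfold fbmCov; linarith

/-- The rescaled path `X_k = n^ν (x_{t_{c+k}} - x_{t_c})` started at the `c`-th partition point. -/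
def scaledPath (x : ℝ → Ω → ℝ) (ν : ℝ) (n c k : ℕ) (ω : Ω) : ℝ :=
  (n : ℝ) ^ ν * (x (((c + k : ℕ) : ℝ) / n) ω - x ((c : ℝ) / n) ω)

lemma mem_Icc_div {n a : ℕ} (hn : 0 < n) (ha : a ≤ n) : (a : ℝ) / n ∈ Set.Icc (0 : ℝ) 1 := by
  have : (0 : ℝ) < n := by exact_mod_cast hn
  refine ⟨by positivity, (div_le_one this).2 (by exact_mod_cast ha)⟩

lemma scaledPath_sub (x : ℝ → Ω → ℝ) (ν : ℝ) (n c i j : ℕ) (ω : Ω) :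
    scaledPath x ν n c i ω - scaledPath x ν n c j ω =
      (n : ℝ) ^ ν * (x (((c + i : ℕ) : ℝ) / n) ω - x (((c + j : ℕ) : ℝ) / n) ω) := by
  unfold scaledPath; ring

lemma scaledPath_zero (x : ℝ → Ω → ℝ) (ν : ℝ) (n c : ℕ) (ω : Ω) : scaledPath x ν n c 0 ω = 0 := by
  simp [scaledPath]

lemma IsFBM.allMom_scaledPath (hx : IsFBM P ν x) {n c k : ℕ} (hn : 0 < n) (h : c + k ≤ n) :
    AllMom P (scaledPath x ν n c k) :=
  ((hx.allMom (mem_Icc_div hn h)).sub (hx.allMom (mem_Icc_div hn (by omega)))).const_mul _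

/-- Covariance of increments of the rescaled path: it has stationary increments of unit scale. -/
lemma IsFBM.integral_scaledPath (hx : IsFBM P ν x) (hν : 0 < ν) {n c i j k l : ℕ} (hn : 0 < n)
    (hi : c + i ≤ n) (hj : c + j ≤ n) (hk : c + k ≤ n) (hl : c + l ≤ n) :
    ∫ ω, (scaledPath x ν n c i ω - scaledPath x ν n c j ω) *
        (scaledPath x ν n c k ω - scaledPath x ν n c l ω) ∂P =
      (|(i : ℝ) - l| ^ (2 * ν) + |(j : ℝ) - k| ^ (2 * ν) - |(i : ℝ) - k| ^ (2 * ν)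
        - |(j : ℝ) - l| ^ (2 * ν)) / 2 := by
  have hn' : (0 : ℝ) < n := by exact_mod_cast hn
  have mi := mem_Icc_div hn hi
  have mj := mem_Icc_div hn hj
  have mk := mem_Icc_div hn hk
  have ml := mem_Icc_div hn hl
  have e : ∀ ω, (scaledPath x ν n c i ω - scaledPath x ν n c j ω) *
        (scaledPath x ν n c k ω - scaledPath x ν n c l ω) =
      (n : ℝ) ^ (2 * ν) * ((x (((c + i : ℕ) : ℝ) / n) ω * x (((c + k : ℕ) : ℝ) / n) ω
        - x (((c + i : ℕ) : ℝ) / n) ω * x (((c + l : ℕ) : ℝ) / n) ω)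
        - (x (((c + j : ℕ) : ℝ) / n) ω * x (((c + k : ℕ) : ℝ) / n) ω
        - x (((c + j : ℕ) : ℝ) / n) ω * x (((c + l : ℕ) : ℝ) / n) ω)) := by
    intro ω
    rw [scaledPath_sub, scaledPath_sub, two_mul ν, Real.rpow_add hn']; ring
  have hA : ∀ {s t : ℝ}, s ∈ Set.Icc (0 : ℝ) 1 → t ∈ Set.Icc (0 : ℝ) 1 →
      AllMom P (fun ω => x s ω * x t ω) := fun hs ht => (hx.allMom hs).mul (hx.allMom ht)
  simp only [e]
  rw [integral_const_mul, integral_sub ((hA mi mk).sub (hA mi ml)).integrable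
    ((hA mj mk).sub (hA mj ml)).integrable, integral_sub (hA mi mk).integrable (hA mi ml).integrable,
    integral_sub (hA mj mk).integrable (hA mj ml).integrable, hx.integral_mul hν mi mk,
    hx.integral_mul hν mi ml, hx.integral_mul hν mj mk, hx.integral_mul hν mj ml]
  have hs : ∀ a b : ℕ, |((c + b : ℕ) : ℝ) / n - ((c + a : ℕ) : ℝ) / n| ^ (2 * ν) =
      ((n : ℝ) ^ (2 * ν))⁻¹ * |(a : ℝ) - b| ^ (2 * ν) := by
    intro a b
    have : |((c + b : ℕ) : ℝ) / n - ((c + a : ℕ) : ℝ) / n| = |(a : ℝ) - b| / n := by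
      rw [← sub_div, abs_div, abs_of_pos hn', abs_sub_comm]; push_cast; congr 2; ring
    rw [this, Real.div_rpow (abs_nonneg _) hn'.le]; ring
  simp only [fbmCov, hs]
  have : (n : ℝ) ^ (2 * ν) ≠ 0 := (Real.rpow_pos_of_pos hn' _).ne'
  field_simp
  ring

end FBM

/-! ### Summability of the covariances -/

section Covariances

/-- Increments of `j ↦ j ^ α`. -/
def powIncr (α : ℝ) (j : ℕ) : ℝ := ((j + 1 : ℕ) : ℝ) ^ α - (j : ℝ) ^ α

variable {α : ℝ}

lemma powIncr_nonneg (hα : 0 < α) (j : ℕ) : 0 ≤ powIncr α j :=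
  sub_nonneg.2 (Real.rpow_le_rpow (by positivity) (by push_cast; linarith) hα.le)

lemma powIncr_anti (hα : 0 < α) (hα1 : α < 1) (j : ℕ) : powIncr α (j + 1) ≤ powIncr α j := by
  have hx : (j : ℝ) ∈ Set.Ici (0 : ℝ) := Set.mem_Ici.2 (by positivity)
  have hy : ((j + 2 : ℕ) : ℝ) ∈ Set.Ici (0 : ℝ) := Set.mem_Ici.2 (by positivity)
  have hh : (0 : ℝ) ≤ 1 / 2 := by norm_num
  have hc := (Real.concaveOn_rpow hα.le hα1.le).2 hx hy hh hh (by norm_num)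
  have e : (1 / 2 : ℝ) • (j : ℝ) + (1 / 2 : ℝ) • ((j + 2 : ℕ) : ℝ) = ((j + 1 : ℕ) : ℝ) := by
    simp only [smul_eq_mul]; push_cast; ring
  rw [e] at hc
  simp only [smul_eq_mul] at hc
  unfold powIncr
  rw [show j + 1 + 1 = j + 2 from rfl]
  linarith

lemma powIncr_zero (hα : 0 < α) : powIncr α 0 = 1 := by
  simp [powIncr, Real.zero_rpow hα.ne']

lemma powIncr_antitone (hα : 0 < α) (hα1 : α < 1) : Antitone (powIncr α) :=
  antitone_nat_of_succ_le (powIncr_anti hα hα1)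

lemma powIncr_le_one (hα : 0 < α) (hα1 : α < 1) (j : ℕ) : powIncr α j ≤ 1 :=
  (powIncr_antitone hα hα1 (Nat.zero_le j)).trans (powIncr_zero hα).le

lemma sum_powIncr (hα : 0 < α) (N : ℕ) : ∑ j ∈ Finset.range N, powIncr α j = (N : ℝ) ^ α := by
  unfold powIncr
  rw [Finset.sum_range_sub (fun j : ℕ => (j : ℝ) ^ α)]
  simp [Real.zero_rpow (ne_of_gt hα)]

/-- Bounds a row sum by its parts on and below, respectively above, the diagonal. -/
lemma sum_le_of_split {N k : ℕ} (hk : k < N) (f u v : ℕ → ℝ)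
    (h1 : ∀ l ≤ k, f l ≤ u (k - l)) (h2 : ∀ l, k < l → l < N → f l ≤ v (l - k - 1)) :
    ∑ l ∈ Finset.range N, f l ≤
      ∑ m ∈ Finset.range (k + 1), u m + ∑ m ∈ Finset.range (N - k - 1), v m := by
  obtain ⟨r, rfl⟩ : ∃ r, N = k + 1 + r := ⟨N - (k + 1), by omega⟩
  rw [Finset.sum_range_add]
  have e : k + 1 + r - k - 1 = r := by omega
  rw [e]
  refine add_le_add ?_ ?_
  · rw [← Finset.sum_range_reflect u]
    refine Finset.sum_le_sum fun l hl => ?_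
    have := Finset.mem_range.1 hl
    have h := h1 l (by omega)
    rwa [show k + 1 - 1 - l = k - l by omega]
  · refine Finset.sum_le_sum fun l hl => ?_
    have := Finset.mem_range.1 hl
    have h := h2 (k + 1 + l) (by omega) (by omega)
    rwa [show k + 1 + l - k - 1 = l by omega] at h

/-- `E[X_k ΔX_l]` for the rescaled path `X`, where `α = 2ν` and `ΔX_l = X_{l+1} - X_l`. -/
def covPI (α : ℝ) (k l : ℕ) : ℝ :=
  (powIncr α l + |(k : ℝ) - l| ^ α - |(k : ℝ) - ((l + 1 : ℕ) : ℝ)| ^ α) / 2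

/-- `E[ΔX_k ΔX_l]` for the rescaled path `X`, where `α = 2ν`. -/
def covII (α : ℝ) (k l : ℕ) : ℝ :=
  (|((k + 1 : ℕ) : ℝ) - l| ^ α + |(k : ℝ) - ((l + 1 : ℕ) : ℝ)| ^ α - |(k : ℝ) - l| ^ α
    - |((k + 1 : ℕ) : ℝ) - ((l + 1 : ℕ) : ℝ)| ^ α) / 2

lemma covPI_of_le {k l : ℕ} (h : k ≤ l) :
    covPI α k l = (powIncr α l - powIncr α (l - k)) / 2 := by
  obtain ⟨m, rfl⟩ := Nat.exists_eq_add_of_le h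
  have e1 : |(k : ℝ) - ((k + m : ℕ) : ℝ)| = (m : ℝ) := by
    rw [abs_sub_comm]; push_cast; rw [add_sub_cancel_left]; exact Nat.abs_cast m
  have e2 : |(k : ℝ) - ((k + m + 1 : ℕ) : ℝ)| = ((m + 1 : ℕ) : ℝ) := by
    rw [abs_sub_comm, add_assoc, Nat.cast_add, add_sub_cancel_left]; exact Nat.abs_cast _
  rw [covPI, e1, e2, Nat.add_sub_cancel_left]
  simp only [powIncr]; ring

lemma covPI_of_lt {k l : ℕ} (h : l < k) :
    covPI α k l = (powIncr α l + powIncr α (k - l - 1)) / 2 := by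
  obtain ⟨m, rfl⟩ := Nat.exists_eq_add_of_lt h
  have e1 : |((l + m + 1 : ℕ) : ℝ) - l| = ((m + 1 : ℕ) : ℝ) := by
    rw [add_assoc, Nat.cast_add, add_sub_cancel_left]; exact Nat.abs_cast _
  have e2 : |((l + m + 1 : ℕ) : ℝ) - ((l + 1 : ℕ) : ℝ)| = (m : ℝ) := by
    rw [show l + m + 1 = (l + 1) + m by ring, Nat.cast_add (l + 1), add_sub_cancel_left]
    exact Nat.abs_cast _
  rw [covPI, e1, e2, show l + m + 1 - l - 1 = m by omega]
  simp only [powIncr]; ring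

lemma covPI_self (hα : 0 < α) (k : ℕ) : covPI α k k = (powIncr α k - 1) / 2 := by
  rw [covPI_of_le le_rfl, Nat.sub_self, powIncr_zero hα]

lemma abs_covPI_le (hα : 0 < α) (hα1 : α < 1) (k l : ℕ) : |covPI α k l| ≤ 1 := by
  have h1 := powIncr_nonneg hα l
  have h2 := powIncr_le_one hα hα1 l
  rcases le_or_gt k l with h | h
  · rw [covPI_of_le h]
    have h3 := powIncr_nonneg hα (l - k)
    have h4 := powIncr_le_one hα hα1 (l - k)
    rw [abs_le]; constructor <;> linarith
  · rw [covPI_of_lt h]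
    have h3 := powIncr_nonneg hα (k - l - 1)
    have h4 := powIncr_le_one hα hα1 (k - l - 1)
    rw [abs_le]; constructor <;> linarith

lemma covII_comm (k l : ℕ) : covII α k l = covII α l k := by
  unfold covII
  rw [abs_sub_comm ((k + 1 : ℕ) : ℝ) l, abs_sub_comm (k : ℝ) ((l + 1 : ℕ) : ℝ),
    abs_sub_comm (k : ℝ) l, abs_sub_comm ((k + 1 : ℕ) : ℝ) ((l + 1 : ℕ) : ℝ)]
  ring

lemma covII_of_lt {k l : ℕ} (h : k < l) :
    covII α k l = (powIncr α (l - k) - powIncr α (l - k - 1)) / 2 := by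
  obtain ⟨m, rfl⟩ := Nat.exists_eq_add_of_lt h
  have e1 : |((k + 1 : ℕ) : ℝ) - ((k + m + 1 : ℕ) : ℝ)| = (m : ℝ) := by
    rw [abs_sub_comm, show k + m + 1 = (k + 1) + m by ring, Nat.cast_add (k + 1),
      add_sub_cancel_left]; exact Nat.abs_cast _
  have e2 : |(k : ℝ) - ((k + m + 1 + 1 : ℕ) : ℝ)| = ((m + 1 + 1 : ℕ) : ℝ) := by
    rw [abs_sub_comm, show k + m + 1 + 1 = k + (m + 1 + 1) by ring, Nat.cast_add k,
      add_sub_cancel_left]; exact Nat.abs_cast _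
  have e3 : |(k : ℝ) - ((k + m + 1 : ℕ) : ℝ)| = ((m + 1 : ℕ) : ℝ) := by
    rw [abs_sub_comm, show k + m + 1 = k + (m + 1) by ring, Nat.cast_add k,
      add_sub_cancel_left]; exact Nat.abs_cast _
  have e4 : |((k + 1 : ℕ) : ℝ) - ((k + m + 1 + 1 : ℕ) : ℝ)| = ((m + 1 : ℕ) : ℝ) := by
    rw [abs_sub_comm, show k + m + 1 + 1 = (k + 1) + (m + 1) by ring, Nat.cast_add (k + 1),
      add_sub_cancel_left]; exact Nat.abs_cast _
  rw [covII, e1, e2, e3, e4, show k + m + 1 - k = m + 1 by omega,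
    show m + 1 - 1 = m by omega]
  simp only [powIncr]; ring

lemma covII_self (hα : 0 < α) (k : ℕ) : covII α k k = 1 := by
  have e1 : |((k + 1 : ℕ) : ℝ) - k| = 1 := by push_cast; simp
  have e2 : |(k : ℝ) - ((k + 1 : ℕ) : ℝ)| = 1 := by rw [abs_sub_comm, e1]
  rw [covII, e1, e2]; simp [Real.zero_rpow hα.ne']

lemma abs_covII_le_one (hα : 0 < α) (hα1 : α < 1) (k l : ℕ) : |covII α k l| ≤ 1 := by
  have key : ∀ {k l : ℕ}, k < l → |covII α k l| ≤ 1 := by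
    intro k l h
    rw [covII_of_lt h]
    have h1 := powIncr_nonneg hα (l - k)
    have h2 := powIncr_le_one hα hα1 (l - k)
    have h3 := powIncr_nonneg hα (l - k - 1)
    have h4 := powIncr_le_one hα hα1 (l - k - 1)
    rw [abs_le]; constructor <;> linarith
  rcases lt_trichotomy k l with h | h | h
  · exact key h
  · rw [h, covII_self hα]; simp
  · rw [covII_comm]; exact key h

lemma sum_diff_powIncr_le (hα : 0 < α) (N : ℕ) :
    ∑ m ∈ Finset.range N, (powIncr α m - powIncr α (m + 1)) / 2 ≤ 1 / 2 := by
  rw [← Finset.sum_div, Finset.sum_range_sub', powIncr_zero hα]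
  have := powIncr_nonneg hα N
  linarith

/-- The correlations of the increments are absolutely summable: off the diagonal their sum
telescopes, `j ↦ j ^ α` being concave. -/
lemma sum_abs_covII_le (hα : 0 < α) (hα1 : α < 1) (N k : ℕ) (hk : k < N) :
    ∑ l ∈ Finset.range N, |covII α k l| ≤ 2 := by
  have key : ∀ {k l : ℕ}, k < l →
      |covII α k l| = (powIncr α (l - k - 1) - powIncr α (l - k - 1 + 1)) / 2 := by
    intro k l h
    have h1 := powIncr_anti hα hα1 (l - k - 1)
    have e : l - k - 1 + 1 = l - k := by omega
    rw [covII_of_lt h, e, abs_of_nonpos (by rw [e] at h1; linarith)]; ring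
  refine (sum_le_of_split hk _
    (fun m => if m = 0 then 1 else (powIncr α (m - 1) - powIncr α (m - 1 + 1)) / 2)
    (fun m => (powIncr α m - powIncr α (m + 1)) / 2) ?_ ?_).trans ?_
  · intro l hl
    rcases hl.eq_or_lt with rfl | hl
    · simp [covII_self hα]
    · rw [if_neg (by omega), covII_comm, key hl]
  · intro l hl _
    exact (key hl).le
  · rw [Finset.sum_range_succ']
    have h1 := sum_diff_powIncr_le hα k
    have h2 := sum_diff_powIncr_le hα (N - k - 1)
    simp only [Nat.add_eq_zero_iff, one_ne_zero, and_false, if_false, if_true,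
      Nat.add_sub_cancel]
    linarith

lemma sum_sum_abs_covII_le (hα : 0 < α) (hα1 : α < 1) (N : ℕ) :
    ∑ k ∈ Finset.range N, ∑ l ∈ Finset.range N, |covII α k l| ≤ 2 * N := by
  calc _ ≤ ∑ k ∈ Finset.range N, (2 : ℝ) :=
        Finset.sum_le_sum fun k hk => sum_abs_covII_le hα hα1 N k (Finset.mem_range.1 hk)
    _ = 2 * N := by simp [mul_comm]

lemma sum_abs_covPI_le (hα : 0 < α) (N k : ℕ) (hk : k < N) :
    ∑ l ∈ Finset.range N, |covPI α l k| ≤ N * powIncr α k / 2 + (N : ℝ) ^ α := by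
  have h0 := powIncr_nonneg hα
  have hsum : ∀ M, M ≤ N → ∑ m ∈ Finset.range M, (powIncr α k / 2 + powIncr α m / 2) ≤
      M * powIncr α k / 2 + (N : ℝ) ^ α / 2 := by
    intro M hM
    rw [Finset.sum_add_distrib, ← Finset.sum_div, ← Finset.sum_div, sum_powIncr hα]
    have : (M : ℝ) ^ α ≤ (N : ℝ) ^ α :=
      Real.rpow_le_rpow (by positivity) (by exact_mod_cast hM) hα.le
    simp only [Finset.sum_const, Finset.card_range, nsmul_eq_mul]
    linarith
  refine (sum_le_of_split hk _ (fun m => powIncr α k / 2 + powIncr α m / 2)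
    (fun m => powIncr α k / 2 + powIncr α m / 2) ?_ ?_).trans ?_
  · intro l hl
    rw [covPI_of_le hl, abs_le]
    have := h0 k
    have := h0 (k - l)
    constructor <;> linarith
  · intro l hl _
    rw [covPI_of_lt hl, abs_le]
    have := h0 k
    have := h0 (l - k - 1)
    constructor <;> linarith
  · have h1 := hsum (k + 1) (by omega)
    have h2 := hsum (N - k - 1) (by omega)
    have e : ((k + 1 : ℕ) : ℝ) + ((N - k - 1 : ℕ) : ℝ) = N := by
      rw [← Nat.cast_add]; congr 1; omega
    calc _ ≤ _ := add_le_add h1 h2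
      _ = (((k + 1 : ℕ) : ℝ) + ((N - k - 1 : ℕ) : ℝ)) * powIncr α k / 2 + (N : ℝ) ^ α := by ring
      _ = _ := by rw [e]

lemma sum_sum_abs_covPI_le (hα : 0 < α) (N : ℕ) :
    ∑ k ∈ Finset.range N, ∑ l ∈ Finset.range N, |covPI α l k| ≤ 2 * N * (N : ℝ) ^ α := by
  calc _ ≤ ∑ k ∈ Finset.range N, (N / 2 * powIncr α k + (N : ℝ) ^ α) :=
        Finset.sum_le_sum fun k hk =>
          (sum_abs_covPI_le hα N k (Finset.mem_range.1 hk)).trans (le_of_eq (by ring))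
    _ = N / 2 * (N : ℝ) ^ α + N * (N : ℝ) ^ α := by
        rw [Finset.sum_add_distrib, ← Finset.mul_sum, sum_powIncr hα]; simp
    _ ≤ _ := by
        have : 0 ≤ (N : ℝ) * (N : ℝ) ^ α := by positivity
        nlinarith

end Covariances

/-! ### Second moments of the iterated Hermite sums -/

section SecondMoment

variable {Ω : Type*} [MeasurableSpace Ω] {P : Measure Ω} [IsProbabilityMeasure P]
  {ν : ℝ} {x : ℝ → Ω → ℝ}

lemma GaussVec.linear {ι κ : Type*} [Fintype ι] [Fintype κ] {G : ι → Ω → ℝ}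
    (h : GaussVec P G) (A : κ → ι → ℝ) : GaussVec P (fun k ω => ∑ i, A k i * G i ω) := by
  refine ⟨?_, fun k => ?_⟩
  · have := h.1.map_fun (ContinuousLinearMap.pi fun k : κ =>
      ∑ i, A k i • (ContinuousLinearMap.proj i : (ι → ℝ) →L[ℝ] ℝ))
    simpa [sum_apply] using this
  · rw [integral_finsetSum _ fun i _ => ((h.allMom i).const_mul _).integrable]
    simp [integral_const_mul, h.2]

/-- The vector `(X_k, X_l, X_{k+1} - X_k, X_{l+1} - X_l)` of the rescaled path. -/
def quadVec (x : ℝ → Ω → ℝ) (ν : ℝ) (n c k l : ℕ) : Fin 4 → Ω → ℝ :=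
  ![fun ω => scaledPath x ν n c k ω, fun ω => scaledPath x ν n c l ω,
    fun ω => scaledPath x ν n c (k + 1) ω - scaledPath x ν n c k ω,
    fun ω => scaledPath x ν n c (l + 1) ω - scaledPath x ν n c l ω]

lemma IsFBM.gaussVec_quadVec (hx : IsFBM P ν x) {n c k l : ℕ} (hn : 0 < n)
    (hk : c + (k + 1) ≤ n) (hl : c + (l + 1) ≤ n) : GaussVec P (quadVec x ν n c k l) := by
  have h := (hx.gaussVec (fun j : Fin 5 => ((![c, c + k, c + (k + 1), c + l, c + (l + 1)] j : ℕ) : ℝ) / n)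
    (by
      intro j
      refine mem_Icc_div hn ?_
      fin_cases j <;> simp <;> omega)).linear
    (fun i j => (n : ℝ) ^ ν * (![![-1, 1, 0, 0, 0], ![-1, 0, 0, 1, 0], ![0, -1, 1, 0, 0],
      ![0, 0, 0, -1, 1]] : Fin 4 → Fin 5 → ℝ) i j)
  convert h using 1
  ext i ω
  fin_cases i <;> simp [quadVec, Fin.sum_univ_five, scaledPath] <;> ring

lemma IsFBM.integral_path_incr (hx : IsFBM P ν x) (hν : 0 < ν) {n c k l : ℕ} (hn : 0 < n)
    (hk : c + k ≤ n) (hl : c + (l + 1) ≤ n) :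
    ∫ ω, scaledPath x ν n c k ω * (scaledPath x ν n c (l + 1) ω - scaledPath x ν n c l ω) ∂P =
      covPI (2 * ν) k l := by
  have h := hx.integral_scaledPath hν (c := c) (i := k) (j := 0) (k := l + 1) (l := l) hn hk
    (by omega) hl (by omega)
  simp only [scaledPath_zero, sub_zero] at h
  rw [h, covPI, powIncr]
  have e : ∀ m : ℕ, |((0 : ℕ) : ℝ) - (m : ℝ)| = m := by intro m; simp
  rw [e, e]; ring

lemma IsFBM.integral_incr_incr (hx : IsFBM P ν x) (hν : 0 < ν) {n c k l : ℕ} (hn : 0 < n)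
    (hk : c + (k + 1) ≤ n) (hl : c + (l + 1) ≤ n) :
    ∫ ω, (scaledPath x ν n c (k + 1) ω - scaledPath x ν n c k ω) *
      (scaledPath x ν n c (l + 1) ω - scaledPath x ν n c l ω) ∂P = covII (2 * ν) k l := by
  rw [hx.integral_scaledPath hν hn hk (by omega) hl (by omega), covII]
  ring

lemma IsFBM.integral_path_sq_le (hx : IsFBM P ν x) (hν : 0 < ν) {n c k N : ℕ} (hn : 0 < n)
    (hk : c + k ≤ n) (hkN : k ≤ N) :
    ∫ ω, scaledPath x ν n c k ω * scaledPath x ν n c k ω ∂P ≤ ((N : ℝ) ^ ν) ^ 2 := by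
  have h := hx.integral_scaledPath hν (c := c) (i := k) (j := 0) (k := k) (l := 0) hn hk
    (by omega) hk (by omega)
  simp only [scaledPath_zero, sub_zero] at h
  rw [h]
  have h0 : (0 : ℝ) ^ (2 * ν) = 0 := Real.zero_rpow (by positivity)
  have e : ((N : ℝ) ^ ν) ^ 2 = (N : ℝ) ^ (2 * ν) := by
    rw [mul_comm, Real.rpow_mul (by positivity)]; simp
  simp only [Nat.cast_zero, sub_zero, zero_sub, abs_neg, abs_zero, Nat.abs_cast, sub_self, h0]
  rw [e]
  have := Real.rpow_le_rpow (z := 2 * ν) (by positivity) (Nat.cast_le (α := ℝ).2 hkN) (by positivity)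
  linarith

lemma IsFBM.momRec_quadVec (hx : IsFBM P ν x) (hν : 0 < ν) (hν1 : 2 * ν < 1) {n c k l N : ℕ}
    (hN : c + N ≤ n) (hk : k < N) (hl : l < N) :
    MomRec (mixMom P (quadVec x ν n c k l)) (covPI (2 * ν) k k) (covPI (2 * ν) l k)
      (covPI (2 * ν) k l) (covPI (2 * ν) l l) (covII (2 * ν) k l) ((N : ℝ) ^ ν) momConst := by
  have hn : 0 < n := by omega
  have hα : 0 < 2 * ν := by positivity
  have hN1 : (1 : ℝ) ≤ N := by exact_mod_cast (by omega : 1 ≤ N)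
  refine momRec_mixMom (hx.gaussVec_quadVec hn (by omega) (by omega))
    (Real.one_le_rpow hN1 hν.le) ?_ ?_ ?_ ?_ ?_ ?_ ?_ ?_ ?_
    (abs_covPI_le hα hν1 _ _) (abs_covPI_le hα hν1 _ _) (abs_covPI_le hα hν1 _ _)
    (abs_covPI_le hα hν1 _ _) (abs_covII_le_one hα hν1 _ _)
  · exact hx.integral_path_sq_le hν hn (by omega) hk.le
  · exact hx.integral_path_sq_le hν hn (by omega) hl.le
  · exact (hx.integral_incr_incr hν hn (by omega) (by omega)).trans (covII_self hα _)
  · exact (hx.integral_incr_incr hν hn (by omega) (by omega)).trans (covII_self hα _)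
  · exact hx.integral_path_incr hν hn (by omega) (by omega)
  · exact hx.integral_path_incr hν hn (by omega) (by omega)
  · exact hx.integral_path_incr hν hn (by omega) (by omega)
  · exact hx.integral_path_incr hν hn (by omega) (by omega)
  · exact hx.integral_incr_incr hν hn (by omega) (by omega)

/-- The summand `X_k^i H_q(X_{k+1} - X_k)` of the iterated Hermite sums. -/
def hermTerm (x : ℝ → Ω → ℝ) (ν : ℝ) (n c q i k : ℕ) (ω : Ω) : ℝ :=
  scaledPath x ν n c k ω ^ i * Hq q (scaledPath x ν n c (k + 1) ω - scaledPath x ν n c k ω)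

lemma IsFBM.allMom_hermTerm (hx : IsFBM P ν x) {n c k : ℕ} (q i : ℕ) (h : c + (k + 1) ≤ n) :
    AllMom P (hermTerm x ν n c q i k) :=
  ((hx.allMom_scaledPath (by omega) (by omega)).pow i).mul
    (((hx.allMom_scaledPath (by omega) h).sub
      (hx.allMom_scaledPath (by omega) (by omega))).Hq_comp q)

lemma integral_hermTerm_mul (n c q i k l : ℕ) :
    ∫ ω, hermTerm x ν n c q i k ω * hermTerm x ν n c q i l ω ∂P =
      mixMom P (quadVec x ν n c k l) i i q q := by
  unfold mixMom hermTerm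
  congr 1; ext ω
  simp only [quadVec, Matrix.cons_val]
  ring

lemma integral_hermTerm (n c q i k l : ℕ) :
    ∫ ω, hermTerm x ν n c q i k ω ∂P = mixMom P (quadVec x ν n c k l) i 0 q 0 := by
  unfold mixMom hermTerm
  congr 1; ext ω
  simp [quadVec, Hq_zero]

lemma integral_sum_sq (N : ℕ) {F : ℕ → Ω → ℝ} (hF : ∀ k < N, AllMom P (F k)) :
    ∫ ω, (∑ k ∈ Finset.range N, F k ω) ^ 2 ∂P =
      ∑ k ∈ Finset.range N, ∑ l ∈ Finset.range N, ∫ ω, F k ω * F l ω ∂P := by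
  simp only [pow_two, Finset.sum_mul_sum]
  rw [integral_finsetSum _ fun k hk => (AllMom.sum _ fun l hl =>
    (hF k (Finset.mem_range.1 hk)).mul (hF l (Finset.mem_range.1 hl))).integrable]
  refine Finset.sum_congr rfl fun k hk => ?_
  rw [integral_finsetSum _ fun l hl =>
    ((hF k (Finset.mem_range.1 hk)).mul (hF l (Finset.mem_range.1 hl))).integrable]

lemma rpow_pow_two_mul (N : ℕ) (ν : ℝ) (i : ℕ) :
    ((N : ℝ) ^ ν) ^ (i + i) = (N : ℝ) ^ (2 * i * ν) := by
  rw [← Real.rpow_natCast, ← Real.rpow_mul (by positivity)]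
  congr 1; push_cast; ring

/-- For `i < q` the factor `X_k^i` cannot absorb all of `H_q(ΔX_k)`, so every non-zero term of
`E[X_k^i H_q(ΔX_k) X_l^i H_q(ΔX_l)]` contains a factor `E[ΔX_k ΔX_l]`, and these are summable. -/
lemma IsFBM.sum_sq_bound_lt (hx : IsFBM P ν x) (hν : 0 < ν) (hν1 : 2 * ν < 1) {q i : ℕ}
    (hi : i < q) : ∃ C : ℝ, 0 ≤ C ∧ ∀ n c N : ℕ, 1 ≤ N → c + N ≤ n →
      ∫ ω, (∑ k ∈ Finset.range N, hermTerm x ν n c q i k ω) ^ 2 ∂P ≤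
        C * (N : ℝ) ^ (1 + 2 * i * ν) := by
  obtain ⟨C, hC, hb⟩ := MomRec.bound_rho momConst momConst_nonneg q q i i (by omega)
  refine ⟨2 * C, by positivity, fun n c N hN hcN => ?_⟩
  have hN0 : (0 : ℝ) < N := by exact_mod_cast hN
  rw [integral_sum_sq N fun k hk => hx.allMom_hermTerm q i (by omega)]
  calc _ ≤ ∑ k ∈ Finset.range N, ∑ l ∈ Finset.range N,
        C * (N : ℝ) ^ (2 * i * ν) * |covII (2 * ν) k l| := by
        refine Finset.sum_le_sum fun k hk => Finset.sum_le_sum fun l hl => ?_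
        rw [integral_hermTerm_mul]
        refine (le_abs_self _).trans ((hb _ _ _ _ _ _ _ (hx.momRec_quadVec hν hν1 hcN
          (Finset.mem_range.1 hk) (Finset.mem_range.1 hl))).trans (le_of_eq ?_))
        rw [if_neg (by omega), rpow_pow_two_mul]; ring
    _ = C * (N : ℝ) ^ (2 * i * ν) *
        ∑ k ∈ Finset.range N, ∑ l ∈ Finset.range N, |covII (2 * ν) k l| := by
        simp only [Finset.mul_sum]
    _ ≤ C * (N : ℝ) ^ (2 * i * ν) * (2 * N) := by
        refine mul_le_mul_of_nonneg_left (sum_sum_abs_covII_le (by positivity) hν1 N) (by positivity)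
    _ = _ := by rw [Real.rpow_add hN0, Real.rpow_one]; ring

/-- For `i = q` the sums have to be centred: full contraction of each Hermite factor with its own
weight gives the mean `q! E[X_k ΔX_k]^q`, which tends to `q! (-1/2)^q`. -/
lemma IsFBM.sum_sq_bound_eq (hx : IsFBM P ν x) (hν : 0 < ν) (hν1 : 2 * ν < 1) {q : ℕ}
    (hq : 1 ≤ q) : ∃ C : ℝ, 0 ≤ C ∧ ∀ n c N : ℕ, 1 ≤ N → c + N ≤ n →
      ∫ ω, (∑ k ∈ Finset.range N, (hermTerm x ν n c q q k ω - q.factorial * (-1 / 2) ^ q)) ^ 2 ∂P ≤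
        C * (N : ℝ) ^ (1 + 2 * q * ν) := by
  obtain ⟨C, hC, hb⟩ := MomRec.main_term momConst momConst_nonneg q q
  refine ⟨2 * (4 * C) + 2 * (q.factorial * q) ^ 2, by positivity, fun n c N hN hcN => ?_⟩
  have hα : 0 < 2 * ν := by positivity
  have hN0 : (0 : ℝ) < N := by exact_mod_cast hN
  have hN1 : (1 : ℝ) ≤ N := by exact_mod_cast hN
  have hq1 : (1 : ℝ) ≤ q := by exact_mod_cast hq
  set m : ℕ → ℝ := fun k => q.factorial * covPI (2 * ν) k k ^ q with hm
  have hF : ∀ k < N, AllMom P (hermTerm x ν n c q q k) := fun k hk =>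
    hx.allMom_hermTerm q q (by omega)
  have hG : ∀ k < N, AllMom P (fun ω => hermTerm x ν n c q q k ω - m k) := fun k hk =>
    (hF k hk).sub (AllMom.const (m k))
  have hmean : ∀ k < N, ∫ ω, hermTerm x ν n c q q k ω ∂P = m k := fun k hk => by
    rw [integral_hermTerm n c q q k k, (hx.momRec_quadVec hν hν1 hcN hk hk).mean]
  -- the random part
  have hrand : ∫ ω, (∑ k ∈ Finset.range N, (hermTerm x ν n c q q k ω - m k)) ^ 2 ∂P ≤
      4 * C * (N : ℝ) ^ (1 + 2 * q * ν) := by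
    rw [integral_sum_sq N hG]
    have hcov : ∀ k < N, ∀ l < N, ∫ ω, (hermTerm x ν n c q q k ω - m k) *
        (hermTerm x ν n c q q l ω - m l) ∂P =
        mixMom P (quadVec x ν n c k l) q q q q - m k * m l := by
      intro k hk l hl
      have e : ∀ ω, (hermTerm x ν n c q q k ω - m k) * (hermTerm x ν n c q q l ω - m l) =
          hermTerm x ν n c q q k ω * hermTerm x ν n c q q l ω - m l * hermTerm x ν n c q q k ω
            - (m k * hermTerm x ν n c q q l ω - m k * m l) := by intro ω; ring
      simp only [e]
      have h1 := (hF k hk).mul (hF l hl)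
      have h2 := (hF k hk).const_mul (m l)
      have h3 := (hF l hl).const_mul (m k)
      have h4 : AllMom P (fun _ => m k * m l) := AllMom.const _
      rw [integral_sub (h1.sub h2).integrable (h3.sub h4).integrable,
        integral_sub h1.integrable h2.integrable, integral_sub h3.integrable h4.integrable,
        integral_const_mul, integral_const_mul, hmean k hk, hmean l hl, integral_hermTerm_mul]
      simp
      ring
    calc _ ≤ ∑ k ∈ Finset.range N, ∑ l ∈ Finset.range N,
          (C * |covPI (2 * ν) l k| + C * (N : ℝ) ^ (2 * q * ν) * |covII (2 * ν) k l|) := by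
          refine Finset.sum_le_sum fun k hk => Finset.sum_le_sum fun l hl => ?_
          have hk := Finset.mem_range.1 hk
          have hl := Finset.mem_range.1 hl
          rw [hcov k hk l hl]
          refine (le_abs_self _).trans ((hb _ _ _ _ _ _ _
            (hx.momRec_quadVec hν hν1 hcN hk hl)).trans (le_of_eq ?_))
          rw [rpow_pow_two_mul]; ring
      _ = C * ∑ k ∈ Finset.range N, ∑ l ∈ Finset.range N, |covPI (2 * ν) l k| +
          C * (N : ℝ) ^ (2 * q * ν) *
          ∑ k ∈ Finset.range N, ∑ l ∈ Finset.range N, |covII (2 * ν) k l| := by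
          simp only [Finset.mul_sum, Finset.sum_add_distrib]
      _ ≤ C * (2 * N * (N : ℝ) ^ (2 * q * ν)) + C * (N : ℝ) ^ (2 * q * ν) * (2 * N) := by
          gcongr
          · refine (sum_sum_abs_covPI_le hα N).trans ?_
            gcongr
            linarith
          · exact sum_sum_abs_covII_le hα hν1 N
      _ = _ := by rw [Real.rpow_add hN0, Real.rpow_one]; ring
  -- the deterministic part
  set D : ℝ := ∑ k ∈ Finset.range N, (m k - q.factorial * (-1 / 2) ^ q) with hD
  have hDle : |D| ≤ q.factorial * q * (N : ℝ) ^ (2 * ν) := by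
    rw [← sum_powIncr hα, Finset.mul_sum]
    refine (Finset.abs_sum_le_sum_abs _ _).trans (Finset.sum_le_sum fun k _ => ?_)
    have hp0 := powIncr_nonneg hα k
    have h1 := abs_pow_sub_pow_le (covPI (2 * ν) k k) (-1 / 2) q
    have h2 : max |covPI (2 * ν) k k| |(-1 / 2 : ℝ)| ^ (q - 1) ≤ 1 := by
      refine pow_le_one₀ (le_max_of_le_left (abs_nonneg _)) (max_le (abs_covPI_le hα hν1 _ _) ?_)
      rw [abs_le]; norm_num
    have h3 : |covPI (2 * ν) k k - -1 / 2| ≤ powIncr (2 * ν) k := by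
      rw [covPI_self hα, abs_le]; constructor <;> linarith
    simp only [hm]
    rw [← mul_sub, abs_mul, Nat.abs_cast, mul_assoc]
    refine mul_le_mul_of_nonneg_left (h1.trans ?_) (by positivity)
    calc _ ≤ powIncr (2 * ν) k * q * 1 := by gcongr
      _ = _ := by ring
  have hD2 : D ^ 2 ≤ (q.factorial * q) ^ 2 * (N : ℝ) ^ (1 + 2 * q * ν) := by
    calc D ^ 2 = |D| ^ 2 := (sq_abs D).symm
      _ ≤ (q.factorial * q * (N : ℝ) ^ (2 * ν)) ^ 2 := pow_le_pow_left₀ (abs_nonneg _) hDle 2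
      _ = (q.factorial * q) ^ 2 * (N : ℝ) ^ (4 * ν) := by
          rw [mul_pow, ← Real.rpow_natCast ((N : ℝ) ^ (2 * ν)), ← Real.rpow_mul hN0.le]
          congr 2; push_cast; ring
      _ ≤ _ := by
          gcongr
          nlinarith
  have hS : AllMom P (fun ω => ∑ k ∈ Finset.range N, (hermTerm x ν n c q q k ω - m k)) :=
    AllMom.sum _ fun k hk => hG k (Finset.mem_range.1 hk)
  have hS0 : AllMom P (fun ω => ∑ k ∈ Finset.range N,
      (hermTerm x ν n c q q k ω - q.factorial * (-1 / 2) ^ q)) :=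
    AllMom.sum _ fun k hk => (hF k (Finset.mem_range.1 hk)).sub (AllMom.const _)
  calc _ ≤ ∫ ω, (2 * (∑ k ∈ Finset.range N, (hermTerm x ν n c q q k ω - m k)) ^ 2 + 2 * D ^ 2) ∂P := by
        refine integral_mono (hS0.pow 2).integrable
          (((hS.pow 2).const_mul 2).add (AllMom.const _)).integrable fun ω => ?_
        have e : ∑ k ∈ Finset.range N, (hermTerm x ν n c q q k ω - q.factorial * (-1 / 2) ^ q) =
            ∑ k ∈ Finset.range N, (hermTerm x ν n c q q k ω - m k) + D := by
          rw [hD, ← Finset.sum_add_distrib]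
          exact Finset.sum_congr rfl fun k _ => by ring
        simp only [e]
        nlinarith [sq_nonneg (∑ k ∈ Finset.range N, (hermTerm x ν n c q q k ω - m k) - D)]
    _ = 2 * ∫ ω, (∑ k ∈ Finset.range N, (hermTerm x ν n c q q k ω - m k)) ^ 2 ∂P + 2 * D ^ 2 := by
        rw [integral_add ((hS.pow 2).const_mul 2).integrable (AllMom.const _).integrable,
          integral_const_mul]
        simp
    _ ≤ 2 * (4 * C * (N : ℝ) ^ (1 + 2 * q * ν)) +
        2 * ((q.factorial * q) ^ 2 * (N : ℝ) ^ (1 + 2 * q * ν)) := by gcongr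
    _ = _ := by ring

/-- The limiting mean of `hermTerm`. -/
def limMean (q i : ℕ) : ℝ := if i = q then q.factorial * (-1 / 2) ^ q else 0

/-- Second moments of the centred iterated Hermite sums, with a constant uniform in `i ≤ q`. -/
lemma IsFBM.sum_sq_bound (hx : IsFBM P ν x) (hν : 0 < ν) (hν1 : 2 * ν < 1) {q : ℕ}
    (hq : 1 ≤ q) : ∃ C : ℝ, 0 ≤ C ∧ ∀ i ≤ q, ∀ n c N : ℕ, 1 ≤ N → c + N ≤ n →
      ∫ ω, (∑ k ∈ Finset.range N, (hermTerm x ν n c q i k ω - limMean q i)) ^ 2 ∂P ≤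
        C * (N : ℝ) ^ (1 + 2 * i * ν) := by
  have key : ∀ i, ∃ C : ℝ, 0 ≤ C ∧ (i ≤ q → ∀ n c N : ℕ, 1 ≤ N → c + N ≤ n →
      ∫ ω, (∑ k ∈ Finset.range N, (hermTerm x ν n c q i k ω - limMean q i)) ^ 2 ∂P ≤
        C * (N : ℝ) ^ (1 + 2 * i * ν)) := by
    intro i
    by_cases hi : i ≤ q
    · rcases hi.eq_or_lt with rfl | hi
      · obtain ⟨C, hC, h⟩ := hx.sum_sq_bound_eq hν hν1 hq
        refine ⟨C, hC, fun _ => ?_⟩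
        simpa [limMean] using h
      · obtain ⟨C, hC, h⟩ := hx.sum_sq_bound_lt hν hν1 hi
        refine ⟨C, hC, fun _ => ?_⟩
        simpa [limMean, hi.ne] using h
    · exact ⟨0, le_rfl, fun h => absurd h hi⟩
  choose C hC h using key
  refine ⟨∑ i ∈ Finset.range (q + 1), C i, Finset.sum_nonneg fun i _ => hC i,
    fun i hi n c N hN hcN => (h i hi n c N hN hcN).trans ?_⟩
  gcongr
  exact Finset.single_le_sum (f := C) (fun i _ => hC i) (Finset.mem_range.2 (by omega))

end SecondMoment

/-! ### Discrete sewing -/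

section Sewing

/-- Discrete sewing: a two-parameter quantity vanishing on blocks of length at most one and
additive up to a superlinear error is itself superlinearly small. Blocks are halved
recursively; each half has length at most two thirds of the block. -/
lemma discrete_sewing {f : ℕ → ℕ → ℝ} {n : ℕ} {K ν : ℝ} (hK : 0 ≤ K) (hν : 0 < ν)
    (h0 : ∀ a, f a a = 0) (h1 : ∀ a, f a (a + 1) = 0)
    (hadd : ∀ a c b, a < c → c < b → b ≤ n →
      f a b ≤ f a c + f c b + K * ((b - a : ℕ) : ℝ) ^ (1 + ν)) (L a : ℕ) (haL : a + L ≤ n) :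
    f a (a + L) ≤ K / (1 - (2 / 3 : ℝ) ^ ν) * (L : ℝ) ^ (1 + ν) := by
  have hlt : (2 / 3 : ℝ) ^ ν < 1 := Real.rpow_lt_one (by norm_num) (by norm_num) hν
  have hpos : 0 < 1 - (2 / 3 : ℝ) ^ ν := by linarith
  set D := K / (1 - (2 / 3 : ℝ) ^ ν) with hD
  have hD0 : 0 ≤ D := div_nonneg hK hpos.le
  have hDK : D * (2 / 3 : ℝ) ^ ν + K = D := by
    rw [hD]; field_simp; ring
  induction L using Nat.strong_induction_on generalizing a with
  | _ L ih =>
    rcases Nat.lt_or_ge L 2 with hL | hL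
    · have hr : 0 ≤ D * (L : ℝ) ^ (1 + ν) := by positivity
      interval_cases L
      · rw [add_zero, h0]; exact hr
      · rw [h1]; exact hr
    · set m := L / 2 with hm
      have hstep := hadd a (a + m) (a + L) (by omega) (by omega) haL
      have e : a + L = a + m + (L - m) := by omega
      have i1 := ih m (by omega) a (by omega)
      have i2 := ih (L - m) (by omega) (a + m) (by omega)
      rw [← e] at i2
      rw [show a + L - a = L by omega] at hstep
      have hL0 : (0 : ℝ) < L := by exact_mod_cast (by omega : 0 < L)
      have key : ∀ r : ℕ, 0 < r → 3 * r ≤ 2 * L →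
          (r : ℝ) ^ (1 + ν) ≤ r * ((2 / 3 : ℝ) ^ ν * (L : ℝ) ^ ν) := by
        intro r hr0 hr
        have hr' : (0 : ℝ) < r := by exact_mod_cast hr0
        rw [Real.rpow_add hr', Real.rpow_one, ← Real.mul_rpow (by norm_num) hL0.le]
        refine mul_le_mul_of_nonneg_left (Real.rpow_le_rpow hr'.le ?_ hν.le) hr'.le
        have : (3 : ℝ) * r ≤ 2 * L := by exact_mod_cast hr
        linarith
      have k1 := key m (by omega) (by omega)
      have k2 := key (L - m) (by omega) (by omega)
      have es : (m : ℝ) + ((L - m : ℕ) : ℝ) = L := by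
        rw [← Nat.cast_add]; congr 1; omega
      calc f a (a + L) ≤ D * (m : ℝ) ^ (1 + ν) + D * ((L - m : ℕ) : ℝ) ^ (1 + ν) +
            K * (L : ℝ) ^ (1 + ν) := by linarith
        _ ≤ D * (m * ((2 / 3 : ℝ) ^ ν * (L : ℝ) ^ ν)) +
            D * (((L - m : ℕ) : ℝ) * ((2 / 3 : ℝ) ^ ν * (L : ℝ) ^ ν)) +
            K * (L : ℝ) ^ (1 + ν) := by gcongr
        _ = D * (((m : ℝ) + ((L - m : ℕ) : ℝ)) * ((2 / 3 : ℝ) ^ ν * (L : ℝ) ^ ν)) +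
            K * (L : ℝ) ^ (1 + ν) := by ring
        _ = (D * (2 / 3 : ℝ) ^ ν + K) * (L : ℝ) ^ (1 + ν) := by
            rw [es, Real.rpow_add hL0, Real.rpow_one]; ring
        _ = _ := by rw [hDK]

end Sewing

/-! ### Controlled expansions -/

section Expansion

variable {Ω : Type*} [MeasurableSpace Ω] {P : Measure Ω} {x : ℝ → Ω → ℝ} {y : ℕ → ℝ → Ω → ℝ}

/-- The remainder `r^{(p)}_{st}` of the expansion of `y^{(p)}` in powers of the increments
of `x`, up to order `q - p`. -/
def ctrlRem (x : ℝ → Ω → ℝ) (y : ℕ → ℝ → Ω → ℝ) (q p : ℕ) (s t : ℝ) (ω : Ω) : ℝ :=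
  y p t ω - ∑ j ∈ Finset.range (q + 1 - p), y (p + j) s ω * xlift x j s t ω

lemma xlift_zero (s t : ℝ) (ω : Ω) : xlift x 0 s t ω = 1 := by simp [xlift]

lemma xlift_self {j : ℕ} (hj : j ≠ 0) (s : ℝ) (ω : Ω) : xlift x j s s ω = 0 := by
  simp [xlift, hj]

lemma ctrlRem_eq {q p : ℕ} (hp : p ≤ q) (s t : ℝ) (ω : Ω) :
    ctrlRem x y q p s t ω = y p t ω - y p s ω -
      ∑ j ∈ Finset.Icc 1 (q + 1 - 1 - p), y (p + j) s ω * xlift x j s t ω := by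
  obtain ⟨d, rfl⟩ := Nat.exists_eq_add_of_le hp
  rw [ctrlRem, show p + d + 1 - p = d + 1 by omega, Finset.sum_range_succ',
    show p + d + 1 - 1 - p = d by omega, Finset.range_eq_Ico, Finset.sum_Ico_add'
      (fun j => y (p + j) s ω * xlift x j s t ω) 0 d 1, xlift_zero, add_zero, zero_add]
  have : Finset.Ico 1 (d + 1) = Finset.Icc 1 d := by ext; simp
  rw [this]; ring

lemma ctrlRem_self {q p : ℕ} (hp : p ≤ q) (s : ℝ) (ω : Ω) : ctrlRem x y q p s s ω = 0 := by
  rw [ctrlRem_eq hp, sub_self, zero_sub, neg_eq_zero]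
  refine Finset.sum_eq_zero fun j hj => ?_
  have := (Finset.mem_Icc.1 hj).1
  rw [xlift_self (by omega), mul_zero]

/-- Chen's relation, i.e. the binomial theorem. -/
lemma xlift_chen (m : ℕ) (s u t : ℝ) (ω : Ω) :
    xlift x m s t ω = ∑ p ∈ Finset.range (m + 1), xlift x (m - p) s u ω * xlift x p u t ω := by
  have h := add_pow (x t ω - x u ω) (x u ω - x s ω) m
  unfold xlift
  rw [show x t ω - x s ω = (x t ω - x u ω) + (x u ω - x s ω) by ring, h, Finset.sum_div]
  refine Finset.sum_congr rfl fun p hp => ?_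
  have hp : p ≤ m := by have := Finset.mem_range.1 hp; omega
  have hf := Nat.choose_mul_factorial_mul_factorial hp
  have hf' : (m.choose p : ℝ) * p.factorial * (m - p).factorial = m.factorial := by
    exact_mod_cast hf
  have h1 : (p.factorial : ℝ) ≠ 0 := by positivity
  have h2 : ((m - p).factorial : ℝ) ≠ 0 := by positivity
  have h3 : (m.choose p : ℝ) ≠ 0 := by exact_mod_cast (Nat.choose_pos hp).ne'
  rw [← hf']
  field_simp

/-- Re-expanding around an intermediate point changes the remainder of `y^{(0)}` by the
remainders of the derivatives. -/
lemma ctrlRem_sub (q : ℕ) (s u t : ℝ) (ω : Ω) :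
    ctrlRem x y q 0 s t ω - ctrlRem x y q 0 u t ω =
      ∑ p ∈ Finset.range (q + 1), ctrlRem x y q p s u ω * xlift x p u t ω := by
  have hflip := Finset.sum_range_diag_flip (q + 1)
    (fun p j => y (p + j) s ω * xlift x j s u ω * xlift x p u t ω)
  have h1 : ∑ m ∈ Finset.range (q + 1), ∑ p ∈ Finset.range (m + 1),
      y (p + (m - p)) s ω * xlift x (m - p) s u ω * xlift x p u t ω =
      ∑ m ∈ Finset.range (q + 1), y m s ω * xlift x m s t ω := by
    refine Finset.sum_congr rfl fun m _ => ?_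
    rw [xlift_chen m s u t, Finset.mul_sum]
    refine Finset.sum_congr rfl fun p hp => ?_
    have := Finset.mem_range.1 hp
    rw [show p + (m - p) = m by omega]; ring
  rw [h1] at hflip
  simp only [ctrlRem, zero_add, Nat.sub_zero, sub_mul, Finset.sum_sub_distrib, Finset.sum_mul]
  rw [hflip]
  ring

end Expansion

/-! ### First moments of the weighted remainder sums -/

section RemainderSums

variable {Ω : Type*} [MeasurableSpace Ω] {P : Measure Ω} [IsProbabilityMeasure P]
  {ν K₀ : ℝ} {q : ℕ} {x : ℝ → Ω → ℝ} {y : ℕ → ℝ → Ω → ℝ}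

lemma integral_sq_le_of_eLpNorm {f : Ω → ℝ} (hf : MemLp f 2 P) {B : ℝ} (hB : 0 ≤ B)
    (h : eLpNorm f 2 P ≤ ENNReal.ofReal B) : ∫ ω, f ω ^ 2 ∂P ≤ B ^ 2 := by
  rw [hf.eLpNorm_eq_integral_rpow_norm (by norm_num) (by norm_num),
    ENNReal.ofReal_le_ofReal_iff hB] at h
  have e : ∫ ω, ‖f ω‖ ^ (2 : ℝ≥0∞).toReal ∂P = ∫ ω, f ω ^ 2 ∂P := by
    congr 1; ext ω; simp
  rw [e] at h
  have h0 : 0 ≤ ∫ ω, f ω ^ 2 ∂P := integral_nonneg fun ω => sq_nonneg _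
  have h2 := pow_le_pow_left₀ (by positivity) h 2
  rwa [← Real.rpow_natCast, ← Real.rpow_mul h0,
    show (2 : ℝ≥0∞).toReal⁻¹ * ((2 : ℕ) : ℝ) = 1 by norm_num, Real.rpow_one] at h2

lemma integral_abs_mul_le {f g : Ω → ℝ} (hf : MemLp f 2 P) (hg : MemLp g 2 P) {A B : ℝ}
    (hA : 0 ≤ A) (hB : 0 ≤ B) (hfA : ∫ ω, f ω ^ 2 ∂P ≤ A ^ 2) (hgB : ∫ ω, g ω ^ 2 ∂P ≤ B ^ 2) :
    ∫ ω, |f ω * g ω| ∂P ≤ A * B := by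
  have h := integral_mul_norm_le_Lp_mul_Lq (μ := P) (f := f) (g := g) Real.HolderConjugate.two_two
    (by simpa using hf) (by simpa using hg)
  simp only [Real.norm_eq_abs, Real.rpow_ofNat, sq_abs, ← Real.sqrt_eq_rpow, ← abs_mul] at h
  refine h.trans (mul_le_mul ?_ ?_ (Real.sqrt_nonneg _) hA)
  · exact Real.sqrt_le_iff.2 ⟨hA, hfA⟩
  · exact Real.sqrt_le_iff.2 ⟨hB, hgB⟩

lemma integral_abs_le_of_sq {f : Ω → ℝ} (hf : MemLp f 2 P) {A : ℝ} (hA : 0 ≤ A)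
    (hfA : ∫ ω, f ω ^ 2 ∂P ≤ A ^ 2) : ∫ ω, |f ω| ∂P ≤ A := by
  have h := integral_abs_mul_le hf (memLp_const (1 : ℝ)) hA zero_le_one hfA (by simp)
  simpa using h

lemma Controlled.measurable_ctrlRem (hx : IsFBM P ν x)
    (hy : Controlled P ν (q + 1) K₀ (xlift x) y) {p : ℕ} (hp : p ≤ q) (s t : ℝ) :
    Measurable (ctrlRem x y q p s t) := by
  refine (hy.1 p (by omega) t).sub (Finset.measurable_fun_sum _ fun j hj => ?_)
  have := Finset.mem_range.1 hj
  exact (hy.1 (p + j) (by omega) s).mul ((((hx.1 t).sub (hx.1 s)).pow_const j).div_const _)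

lemma Controlled.eLpNorm_ctrlRem
    (hy : Controlled P ν (q + 1) K₀ (xlift x) y) {p : ℕ} (hp : p ≤ q) {s t : ℝ} (hs : 0 ≤ s)
    (hst : s ≤ t) (ht : t ≤ 1) : eLpNorm (ctrlRem x y q p s t) 2 P ≤
      ENNReal.ofReal (|K₀| * (t - s) ^ (((q + 1 - p : ℕ) : ℝ) * ν)) := by
  have h := hy.2.2.2 p (by omega) s t hs hst ht
  have e : ctrlRem x y q p s t = fun ω => y p t ω - y p s ω -
      ∑ j ∈ Finset.Icc 1 (q + 1 - 1 - p), y (p + j) s ω * xlift x j s t ω := by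
    ext ω; exact ctrlRem_eq hp s t ω
  rw [e]
  refine h.trans (ENNReal.ofReal_le_ofReal ?_)
  exact mul_le_mul_of_nonneg_right (le_abs_self _) (Real.rpow_nonneg (by linarith) _)

lemma Controlled.memLp_ctrlRem (hx : IsFBM P ν x)
    (hy : Controlled P ν (q + 1) K₀ (xlift x) y) {p : ℕ} (hp : p ≤ q) {s t : ℝ} (hs : 0 ≤ s)
    (hst : s ≤ t) (ht : t ≤ 1) : MemLp (ctrlRem x y q p s t) 2 P :=
  ⟨(hy.measurable_ctrlRem hx hp s t).aestronglyMeasurable,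
    (hy.eLpNorm_ctrlRem hp hs hst ht).trans_lt ENNReal.ofReal_lt_top⟩

lemma Controlled.integral_ctrlRem_sq (hx : IsFBM P ν x)
    (hy : Controlled P ν (q + 1) K₀ (xlift x) y) {p : ℕ} (hp : p ≤ q) {s t : ℝ} (hs : 0 ≤ s)
    (hst : s ≤ t) (ht : t ≤ 1) : ∫ ω, ctrlRem x y q p s t ω ^ 2 ∂P ≤
      (|K₀| * (t - s) ^ (((q + 1 - p : ℕ) : ℝ) * ν)) ^ 2 :=
  integral_sq_le_of_eLpNorm (hy.memLp_ctrlRem hx hp hs hst ht)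
    (mul_nonneg (abs_nonneg _) (Real.rpow_nonneg (by linarith) _))
    (hy.eLpNorm_ctrlRem hp hs hst ht)

lemma xlift_mul_hermIncr {n : ℕ} (hn : 0 < n) (p c k : ℕ) (ω : Ω) :
    xlift x p ((c : ℝ) / n) (((c + k : ℕ) : ℝ) / n) ω * hermIncr x ν n q (c + k) ω =
      (n : ℝ) ^ (-(p * ν)) / p.factorial * hermTerm x ν n c q p k ω := by
  have hn' : (0 : ℝ) < n := by exact_mod_cast hn
  have e1 : hermIncr x ν n q (c + k) ω =
      Hq q (scaledPath x ν n c (k + 1) ω - scaledPath x ν n c k ω) := by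
    rw [hermIncr, scaledPath_sub]; push_cast; ring_nf
  have e2 : (n : ℝ) ^ (-(p * ν)) * ((n : ℝ) ^ ν) ^ p = 1 := by
    rw [← Real.rpow_natCast, ← Real.rpow_mul hn'.le, ← Real.rpow_add hn']
    rw [show -(p * ν) + ν * p = 0 by ring, Real.rpow_zero]
  have e3 : scaledPath x ν n c k ω ^ p =
      ((n : ℝ) ^ ν) ^ p * (x (((c + k : ℕ) : ℝ) / n) ω - x ((c : ℝ) / n) ω) ^ p := by
    rw [scaledPath, mul_pow]
  rw [e1, xlift, hermTerm, e3]
  calc _ = ((n : ℝ) ^ (-(p * ν)) * ((n : ℝ) ^ ν) ^ p) *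
        ((x (((c + k : ℕ) : ℝ) / n) ω - x ((c : ℝ) / n) ω) ^ p / p.factorial *
        Hq q (scaledPath x ν n c (k + 1) ω - scaledPath x ν n c k ω)) := by rw [e2, one_mul]
    _ = _ := by ring

/-- The iterated sum `J_{t_c}^{t_b}(x^p; h^{n,q})`. -/
def iterSum (x : ℝ → Ω → ℝ) (ν : ℝ) (n q p c b : ℕ) (ω : Ω) : ℝ :=
  ∑ k ∈ Finset.Ico c b, xlift x p ((c : ℝ) / n) ((k : ℝ) / n) ω * hermIncr x ν n q k ω

lemma iterSum_eq {n : ℕ} (hn : 0 < n) (p c N : ℕ) (ω : Ω) :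
    iterSum x ν n q p c (c + N) ω = (n : ℝ) ^ (-(p * ν)) / p.factorial *
      ∑ k ∈ Finset.range N, hermTerm x ν n c q p k ω := by
  rw [iterSum, Finset.sum_Ico_eq_sum_range, Nat.add_sub_cancel_left, Finset.mul_sum]
  exact Finset.sum_congr rfl fun k _ => xlift_mul_hermIncr hn p c k ω

lemma IsFBM.allMom_hermIncr (hx : IsFBM P ν x) {n k : ℕ} (q : ℕ) (hk : k < n) :
    AllMom P (hermIncr x ν n q k) := by
  have h1 : ((k : ℝ) + 1) / n ∈ Set.Icc (0 : ℝ) 1 := by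
    have := mem_Icc_div (n := n) (a := k + 1) (by omega) hk
    push_cast at this; exact this
  exact (((hx.allMom h1).sub (hx.allMom (mem_Icc_div (by omega) hk.le))).const_mul _).Hq_comp q

lemma IsFBM.allMom_iterSum (hx : IsFBM P ν x) {n c N : ℕ} (hn : 0 < n) (q p : ℕ)
    (h : c + N ≤ n) : AllMom P (iterSum x ν n q p c (c + N)) := by
  have : iterSum x ν n q p c (c + N) = fun ω => (n : ℝ) ^ (-(p * ν)) / p.factorial *
      ∑ k ∈ Finset.range N, hermTerm x ν n c q p k ω := by
    ext ω; exact iterSum_eq hn p c N ω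
  rw [this]
  exact (AllMom.sum _ fun k hk => hx.allMom_hermTerm q p
    (by have := Finset.mem_range.1 hk; omega)).const_mul _

lemma abs_limMean_le (q i : ℕ) : |limMean q i| ≤ q.factorial := by
  unfold limMean
  split_ifs
  · rw [abs_mul, abs_pow, Nat.abs_cast]
    refine mul_le_of_le_one_right (by positivity) (pow_le_one₀ (abs_nonneg _) ?_)
    rw [abs_le]; norm_num
  · simp

/-- The second-moment bounds for the rescaled path, transferred to `J(x^p; h^{n,q})`. Since
`qν < 1/2`, the exponent `1/2 + pν` of `N` obtained there may be replaced by `1 - qν + pν`. -/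
lemma IsFBM.iterSum_sq_bound (hx : IsFBM P ν x) (hν : 0 < ν) (hq : 1 ≤ q)
    (hqν : 2 * (q * ν) < 1) : ∃ C : ℝ, 0 ≤ C ∧ ∀ p ≤ q, ∀ n c N : ℕ, 1 ≤ N → c + N ≤ n →
      ∫ ω, iterSum x ν n q p c (c + N) ω ^ 2 ∂P ≤
        (C * (n : ℝ) ^ (-(p * ν)) * (N : ℝ) ^ (1 - q * ν + p * ν)) ^ 2 := by
  have hq1 : (1 : ℝ) ≤ q := by exact_mod_cast hq
  have hν1 : 2 * ν < 1 := by nlinarith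
  obtain ⟨C, hC, hb⟩ := hx.sum_sq_bound hν hν1 hq
  refine ⟨√(2 * C + 2 * (q.factorial : ℝ) ^ 2), Real.sqrt_nonneg _, fun p hp n c N hN hcN => ?_⟩
  have hn : 0 < n := by omega
  have hN1 : (1 : ℝ) ≤ N := by exact_mod_cast hN
  have hN0 : (0 : ℝ) < N := by linarith
  have hT : ∀ k ∈ Finset.range N, AllMom P (hermTerm x ν n c q p k) := fun k hk =>
    hx.allMom_hermTerm q p (by have := Finset.mem_range.1 hk; omega)
  have hS : AllMom P (fun ω => ∑ k ∈ Finset.range N, hermTerm x ν n c q p k ω) := AllMom.sum _ hT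
  have hS' : AllMom P (fun ω => ∑ k ∈ Finset.range N, (hermTerm x ν n c q p k ω - limMean q p)) :=
    AllMom.sum _ fun k hk => (hT k hk).sub (AllMom.const _)
  have hlim : (N * limMean q p) ^ 2 ≤ (q.factorial : ℝ) ^ 2 * (N : ℝ) ^ (2 * (1 - q * ν + p * ν)) := by
    by_cases hpq : p = q
    · rw [mul_pow, mul_comm, ← sq_abs (limMean q p), hpq,
        show 2 * (1 - q * ν + q * ν) = ((2 : ℕ) : ℝ) by push_cast; ring, Real.rpow_natCast]
      exact mul_le_mul_of_nonneg_right (pow_le_pow_left₀ (abs_nonneg _) (abs_limMean_le q q) 2)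
        (by positivity)
    · rw [limMean, if_neg hpq, mul_zero, zero_pow two_ne_zero]; positivity
  have hmain : ∫ ω, (∑ k ∈ Finset.range N, hermTerm x ν n c q p k ω) ^ 2 ∂P ≤
      (2 * C + 2 * (q.factorial : ℝ) ^ 2) * (N : ℝ) ^ (2 * (1 - q * ν + p * ν)) := by
    calc _ ≤ ∫ ω, (2 * (∑ k ∈ Finset.range N, (hermTerm x ν n c q p k ω - limMean q p)) ^ 2 +
          2 * (N * limMean q p) ^ 2) ∂P := by
          refine integral_mono (hS.pow 2).integrable
            (((hS'.pow 2).const_mul 2).add (AllMom.const _)).integrable fun ω => ?_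
          simp only [Finset.sum_sub_distrib, Finset.sum_const, Finset.card_range, nsmul_eq_mul]
          nlinarith [sq_nonneg (∑ k ∈ Finset.range N, hermTerm x ν n c q p k ω -
            2 * (N * limMean q p))]
      _ = 2 * ∫ ω, (∑ k ∈ Finset.range N, (hermTerm x ν n c q p k ω - limMean q p)) ^ 2 ∂P +
          2 * (N * limMean q p) ^ 2 := by
          rw [integral_add ((hS'.pow 2).const_mul 2).integrable (AllMom.const _).integrable,
            integral_const_mul]
          simp
      _ ≤ 2 * (C * (N : ℝ) ^ (2 * (1 - q * ν + p * ν))) +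
          2 * ((q.factorial : ℝ) ^ 2 * (N : ℝ) ^ (2 * (1 - q * ν + p * ν))) := by
          refine add_le_add (mul_le_mul_of_nonneg_left ((hb p hp n c N hN hcN).trans ?_)
            (by norm_num)) (mul_le_mul_of_nonneg_left hlim (by norm_num))
          refine mul_le_mul_of_nonneg_left (Real.rpow_le_rpow_of_exponent_le hN1 ?_) hC
          linarith
      _ = _ := by ring
  simp only [iterSum_eq hn, mul_pow]
  rw [integral_const_mul, Real.sq_sqrt (by positivity)]
  have e3 : ((N : ℝ) ^ (1 - q * ν + p * ν)) ^ 2 = (N : ℝ) ^ (2 * (1 - q * ν + p * ν)) := by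
    rw [mul_comm 2, Real.rpow_mul hN0.le]; simp
  have hfac : (1 : ℝ) ≤ p.factorial := by exact_mod_cast Nat.factorial_pos p
  have e4 : ((n : ℝ) ^ (-(p * ν)) / p.factorial) ^ 2 ≤ ((n : ℝ) ^ (-(p * ν))) ^ 2 :=
    pow_le_pow_left₀ (by positivity) (div_le_self (by positivity) hfac) 2
  rw [e3]
  calc _ ≤ ((n : ℝ) ^ (-(p * ν))) ^ 2 *
        ((2 * C + 2 * (q.factorial : ℝ) ^ 2) * (N : ℝ) ^ (2 * (1 - q * ν + p * ν))) :=
        mul_le_mul e4 hmain (integral_nonneg fun ω => sq_nonneg _) (by positivity)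
    _ = _ := by ring

/-- The sum over a block of the remainders of `y^{(0)}` weighted by the Hermite increments. -/
def remSum (x : ℝ → Ω → ℝ) (y : ℕ → ℝ → Ω → ℝ) (ν : ℝ) (n q a b : ℕ) (ω : Ω) : ℝ :=
  ∑ k ∈ Finset.Ico a b, ctrlRem x y q 0 ((a : ℝ) / n) ((k : ℝ) / n) ω * hermIncr x ν n q k ω

lemma remSum_split {n a c b : ℕ} (hac : a ≤ c) (hcb : c ≤ b) (ω : Ω) :
    remSum x y ν n q a b ω = remSum x y ν n q a c ω + remSum x y ν n q c b ω +
      ∑ p ∈ Finset.range (q + 1),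
        ctrlRem x y q p ((a : ℝ) / n) ((c : ℝ) / n) ω * iterSum x ν n q p c b ω := by
  have h : ∑ p ∈ Finset.range (q + 1),
        ctrlRem x y q p ((a : ℝ) / n) ((c : ℝ) / n) ω * iterSum x ν n q p c b ω =
      ∑ k ∈ Finset.Ico c b, (ctrlRem x y q 0 ((a : ℝ) / n) ((k : ℝ) / n) ω -
        ctrlRem x y q 0 ((c : ℝ) / n) ((k : ℝ) / n) ω) * hermIncr x ν n q k ω := by
    simp only [ctrlRem_sub, iterSum, Finset.mul_sum, Finset.sum_mul]
    rw [Finset.sum_comm]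
    exact Finset.sum_congr rfl fun k _ => Finset.sum_congr rfl fun p _ => by ring
  rw [h]
  unfold remSum
  rw [← Finset.sum_Ico_consecutive _ hac hcb, add_assoc, ← Finset.sum_add_distrib]
  congr 1
  exact Finset.sum_congr rfl fun k _ => by ring

lemma div_le_div_nat {n a b : ℕ} (hab : a ≤ b) : (a : ℝ) / n ≤ (b : ℝ) / n :=
  div_le_div_of_nonneg_right (by exact_mod_cast hab) (by positivity)

lemma Controlled.integrable_remSum (hx : IsFBM P ν x)
    (hy : Controlled P ν (q + 1) K₀ (xlift x) y) {n a b : ℕ} (hb : b ≤ n) :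
    Integrable (remSum x y ν n q a b) P := by
  refine integrable_finsetSum _ fun k hk => ?_
  have := Finset.mem_Ico.1 hk
  have hn : 0 < n := by omega
  exact (hy.memLp_ctrlRem hx (Nat.zero_le _) (mem_Icc_div hn (by omega)).1
    (div_le_div_nat this.1) (mem_Icc_div hn (by omega)).2).integrable_mul
    (hx.allMom_hermIncr q (by omega)).memLp_two

/-- The remainder sums are superlinearly small in `L¹`, by discrete sewing. -/
lemma Controlled.remSum_bound (hx : IsFBM P ν x) (hν : 0 < ν) (hq : 1 ≤ q)
    (hqν : 2 * (q * ν) < 1) (hy : Controlled P ν (q + 1) K₀ (xlift x) y) :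
    ∃ C : ℝ, 0 ≤ C ∧ ∀ n a N : ℕ, 0 < n → a + N ≤ n →
      ∫ ω, |remSum x y ν n q a (a + N) ω| ∂P ≤
        C * (n : ℝ) ^ (-((q + 1) * ν)) * (N : ℝ) ^ (1 + ν) := by
  obtain ⟨C, hC, hb⟩ := hx.iterSum_sq_bound hν hq hqν
  have hlt : (2 / 3 : ℝ) ^ ν < 1 := Real.rpow_lt_one (by norm_num) (by norm_num) hν
  have hpos : 0 < 1 - (2 / 3 : ℝ) ^ ν := by linarith
  refine ⟨(q + 1) * (|K₀| * C) / (1 - (2 / 3 : ℝ) ^ ν), by positivity, fun n a N hn haN => ?_⟩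
  have hn' : (0 : ℝ) < n := by exact_mod_cast hn
  have hsew := discrete_sewing (f := fun a b => ∫ ω, |remSum x y ν n q a b ω| ∂P) (n := n)
    (K := (q + 1) * (|K₀| * C) * (n : ℝ) ^ (-((q + 1) * ν))) (ν := ν) (by positivity) hν
    (fun a => by simp [remSum]) (fun a => by simp [remSum, ctrlRem_self]) ?_ N a haN
  · refine hsew.trans (le_of_eq (by ring))
  intro a c b hac hcb hbn
  obtain ⟨N, rfl⟩ := Nat.exists_eq_add_of_le hcb.le
  have hterm : ∀ p ∈ Finset.range (q + 1),
      Integrable (fun ω => ctrlRem x y q p ((a : ℝ) / n) ((c : ℝ) / n) ω *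
        iterSum x ν n q p c (c + N) ω) P ∧
      ∫ ω, |ctrlRem x y q p ((a : ℝ) / n) ((c : ℝ) / n) ω *
        iterSum x ν n q p c (c + N) ω| ∂P ≤ |K₀| * C * (n : ℝ) ^ (-((q + 1) * ν)) *
          ((c + N - a : ℕ) : ℝ) ^ (1 + ν) := by
    intro p hp
    have hp : p ≤ q := by have := Finset.mem_range.1 hp; omega
    have hs0 := (mem_Icc_div hn (by omega : a ≤ n)).1
    have hst := div_le_div_nat (n := n) hac.le
    have ht1 := (mem_Icc_div hn (by omega : c ≤ n)).2
    have hL0 : (0 : ℝ) < ((c + N - a : ℕ) : ℝ) := by exact_mod_cast (by omega : 0 < c + N - a)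
    have m1 := hy.memLp_ctrlRem hx hp hs0 hst ht1
    have m2 := (hx.allMom_iterSum hn q p hbn).memLp_two
    refine ⟨m1.integrable_mul m2, ?_⟩
    refine (integral_abs_mul_le m1 m2
      (mul_nonneg (abs_nonneg _) (Real.rpow_nonneg (by linarith) _)) (by positivity)
      (hy.integral_ctrlRem_sq hx hp hs0 hst ht1) (hb p hp n c N (by omega) hbn)).trans ?_
    have e1 : (c : ℝ) / n - (a : ℝ) / n = ((c - a : ℕ) : ℝ) / n := by
      rw [Nat.cast_sub hac.le]; ring
    have e2 : ((q + 1 - p : ℕ) : ℝ) = q + 1 - p := by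
      rw [Nat.cast_sub (by omega)]; push_cast; ring
    have hpq : (p : ℝ) ≤ q := by exact_mod_cast hp
    rw [e1, e2, Real.div_rpow (by positivity) hn'.le]
    have hpre : (((c - a : ℕ) : ℝ)) ^ ((q + 1 - p) * ν) * (N : ℝ) ^ (1 - q * ν + p * ν) ≤
        ((c + N - a : ℕ) : ℝ) ^ (1 + ν) := by
      have e3 : (1 + ν : ℝ) = (q + 1 - p) * ν + (1 - q * ν + p * ν) := by ring
      rw [e3, Real.rpow_add hL0]
      have f1 : ((c - a : ℕ) : ℝ) ≤ ((c + N - a : ℕ) : ℝ) := by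
        exact_mod_cast (by omega : c - a ≤ c + N - a)
      have f2 : (N : ℝ) ≤ ((c + N - a : ℕ) : ℝ) := by
        exact_mod_cast (by omega : N ≤ c + N - a)
      refine mul_le_mul (Real.rpow_le_rpow (by positivity) f1 ?_)
        (Real.rpow_le_rpow (by positivity) f2 ?_) (by positivity) (by positivity)
      · have : 0 ≤ (q : ℝ) - p := by linarith
        have : 0 ≤ (q : ℝ) + 1 - p := by linarith
        positivity
      · have : 0 ≤ p * ν := by positivity
        linarith
    have e4 : (n : ℝ) ^ (-((q + 1) * ν)) =
        ((n : ℝ) ^ ((q + 1 - p) * ν))⁻¹ * (n : ℝ) ^ (-(p * ν)) := by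
      rw [← Real.rpow_neg hn'.le, ← Real.rpow_add hn']; congr 1; ring
    rw [e4]
    calc _ = |K₀| * C * (((n : ℝ) ^ ((q + 1 - p) * ν))⁻¹ * (n : ℝ) ^ (-(p * ν))) *
          ((((c - a : ℕ) : ℝ)) ^ ((q + 1 - p) * ν) * (N : ℝ) ^ (1 - q * ν + p * ν)) := by
          rw [div_eq_mul_inv]; ring
      _ ≤ _ := mul_le_mul_of_nonneg_left hpre (by positivity)
  have i1 := hy.integrable_remSum (q := q) hx (a := a) (b := c) (n := n) (by omega)
  have i2 := hy.integrable_remSum (q := q) hx (a := c) (b := c + N) (n := n) hbn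
  have i12 : Integrable (fun ω => |remSum x y ν n q a c ω| + |remSum x y ν n q c (c + N) ω|) P :=
    i1.abs.add i2.abs
  have i3 : Integrable (fun ω => ∑ p ∈ Finset.range (q + 1),
      |ctrlRem x y q p ((a : ℝ) / n) ((c : ℝ) / n) ω * iterSum x ν n q p c (c + N) ω|) P :=
    integrable_finsetSum _ fun p hp => (hterm p hp).1.abs
  calc ∫ ω, |remSum x y ν n q a (c + N) ω| ∂P
      ≤ ∫ ω, (|remSum x y ν n q a c ω| + |remSum x y ν n q c (c + N) ω| +
        ∑ p ∈ Finset.range (q + 1),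
        |ctrlRem x y q p ((a : ℝ) / n) ((c : ℝ) / n) ω * iterSum x ν n q p c (c + N) ω|) ∂P := by
        refine integral_mono (hy.integrable_remSum hx hbn).abs (i12.add i3)
          fun ω => ?_
        simp only [remSum_split hac.le hcb.le]
        exact (abs_add_le _ _).trans (add_le_add (abs_add_le _ _)
          (Finset.abs_sum_le_sum_abs _ _))
    _ = ∫ ω, |remSum x y ν n q a c ω| ∂P + ∫ ω, |remSum x y ν n q c (c + N) ω| ∂P +
        ∑ p ∈ Finset.range (q + 1), ∫ ω,
        |ctrlRem x y q p ((a : ℝ) / n) ((c : ℝ) / n) ω * iterSum x ν n q p c (c + N) ω| ∂P := by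
        rw [integral_add i12 i3, integral_add i1.abs i2.abs,
          integral_finsetSum _ fun p hp => (hterm p hp).1.abs]
    _ ≤ _ := by
        refine add_le_add le_rfl ((Finset.sum_le_sum fun p hp => (hterm p hp).2).trans
          (le_of_eq ?_))
        simp only [Finset.sum_const, Finset.card_range, nsmul_eq_mul]
        push_cast; ring

end RemainderSums

/-! ### Freezing the weight on a block -/

section Blocks

variable {Ω : Type*} [MeasurableSpace Ω] {P : Measure Ω} [IsProbabilityMeasure P]
  {ν K₀ : ℝ} {q : ℕ} {x : ℝ → Ω → ℝ} {y : ℕ → ℝ → Ω → ℝ}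

/-- The contribution of the indices in `[a, b)` to the difference between the normalized weighted
sum and `(-1/2)^q` times the Riemann sum of `y^{(q)}`. -/
def blockErr (x : ℝ → Ω → ℝ) (y : ℕ → ℝ → Ω → ℝ) (ν : ℝ) (n q a b : ℕ) (ω : Ω) : ℝ :=
  ∑ k ∈ Finset.Ico a b, ((n : ℝ) ^ (-(1 - (q : ℝ) * ν)) *
    (y 0 ((k : ℝ) / n) ω * hermIncr x ν n q k ω) - (-1 / 2 : ℝ) ^ q / n * y q ((k : ℝ) / n) ω)

/-- Expanding the weight around the left endpoint of the block, the mean of the top-order term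
cancels the Riemann sum of the frozen weight `y^{(q)}`. -/
lemma blockErr_eq {n : ℕ} (hn : 0 < n) (a N : ℕ) (ω : Ω) :
    blockErr x y ν n q a (a + N) ω =
      (n : ℝ) ^ (-(1 - (q : ℝ) * ν)) * remSum x y ν n q a (a + N) ω +
      ∑ j ∈ Finset.range (q + 1), (n : ℝ) ^ (-(1 - (q : ℝ) * ν)) *
        ((n : ℝ) ^ (-(j * ν)) / j.factorial) * (y j ((a : ℝ) / n) ω *
          ∑ k ∈ Finset.range N, (hermTerm x ν n a q j k ω - limMean q j)) -
      (-1 / 2 : ℝ) ^ q / n *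
        ∑ k ∈ Finset.Ico a (a + N), ctrlRem x y q q ((a : ℝ) / n) ((k : ℝ) / n) ω := by
  have hn' : (0 : ℝ) < n := by exact_mod_cast hn
  have h0 : ∑ k ∈ Finset.Ico a (a + N), y 0 ((k : ℝ) / n) ω * hermIncr x ν n q k ω =
      remSum x y ν n q a (a + N) ω + ∑ j ∈ Finset.range (q + 1), y j ((a : ℝ) / n) ω *
        iterSum x ν n q j a (a + N) ω := by
    simp only [remSum, iterSum, Finset.mul_sum]
    rw [Finset.sum_comm, ← Finset.sum_add_distrib]
    refine Finset.sum_congr rfl fun k _ => ?_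
    simp only [ctrlRem, zero_add, Nat.sub_zero, sub_mul, Finset.sum_mul, mul_assoc]
    ring
  have hq0 : ∑ k ∈ Finset.Ico a (a + N), y q ((k : ℝ) / n) ω =
      ∑ k ∈ Finset.Ico a (a + N), ctrlRem x y q q ((a : ℝ) / n) ((k : ℝ) / n) ω +
        N * y q ((a : ℝ) / n) ω := by
    have : ∀ k ∈ Finset.Ico a (a + N), y q ((k : ℝ) / n) ω =
        ctrlRem x y q q ((a : ℝ) / n) ((k : ℝ) / n) ω + y q ((a : ℝ) / n) ω := by
      intro k _
      simp [ctrlRem, xlift_zero]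
    rw [Finset.sum_congr rfl this, Finset.sum_add_distrib]
    simp
  have hmean : ∑ j ∈ Finset.range (q + 1), (n : ℝ) ^ (-(1 - (q : ℝ) * ν)) *
      ((n : ℝ) ^ (-(j * ν)) / j.factorial) * (y j ((a : ℝ) / n) ω * (N * limMean q j)) =
      (-1 / 2 : ℝ) ^ q / n * (N * y q ((a : ℝ) / n) ω) := by
    rw [Finset.sum_eq_single q]
    · have e : (n : ℝ) ^ (-(1 - (q : ℝ) * ν)) * (n : ℝ) ^ (-(q * ν)) = (n : ℝ)⁻¹ := by
        rw [← Real.rpow_add hn', show -(1 - (q : ℝ) * ν) + -(q * ν) = -1 by ring,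
          Real.rpow_neg_one]
      have hf : (q.factorial : ℝ) ≠ 0 := by positivity
      rw [limMean, if_pos rfl]
      calc _ = ((n : ℝ) ^ (-(1 - (q : ℝ) * ν)) * (n : ℝ) ^ (-(q * ν))) *
            (y q ((a : ℝ) / n) ω * (N * (-1 / 2) ^ q)) := by field_simp
        _ = _ := by rw [e]; ring
    · intro j _ hj
      simp [limMean, hj]
    · intro h; simp at h
  have hmid : ∑ j ∈ Finset.range (q + 1), (n : ℝ) ^ (-(1 - (q : ℝ) * ν)) *
        ((n : ℝ) ^ (-(j * ν)) / j.factorial) * (y j ((a : ℝ) / n) ω *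
          ∑ k ∈ Finset.range N, (hermTerm x ν n a q j k ω - limMean q j)) =
      (n : ℝ) ^ (-(1 - (q : ℝ) * ν)) * ∑ j ∈ Finset.range (q + 1), y j ((a : ℝ) / n) ω *
        iterSum x ν n q j a (a + N) ω - (-1 / 2 : ℝ) ^ q / n * (N * y q ((a : ℝ) / n) ω) := by
    rw [← hmean, Finset.mul_sum, ← Finset.sum_sub_distrib]
    refine Finset.sum_congr rfl fun j _ => ?_
    rw [iterSum_eq hn, Finset.sum_sub_distrib, Finset.sum_const, Finset.card_range, nsmul_eq_mul]
    ring
  rw [blockErr, Finset.sum_sub_distrib, ← Finset.mul_sum, ← Finset.mul_sum, h0, hq0, hmid]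
  ring

/-- On the event where the weights are bounded by `M` at the left endpoint, the block error is
dominated by a variable with small expectation. -/
lemma Controlled.block_bound (hx : IsFBM P ν x) (hν : 0 < ν) (hq : 1 ≤ q)
    (hqν : 2 * (q * ν) < 1) (hy : Controlled P ν (q + 1) K₀ (xlift x) y) :
    ∃ C : ℝ, 0 ≤ C ∧ ∀ n a N : ℕ, 0 < n → a + N ≤ n → ∀ M : ℝ, 0 ≤ M → ∃ G : Ω → ℝ,
      Integrable G P ∧ (∀ ω, 0 ≤ G ω) ∧
      ∫ ω, G ω ∂P ≤ C * (((N : ℝ) / n) ^ (1 + ν) + M * (n : ℝ) ^ (q * ν - 1 / 2)) ∧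
      ∀ ω, (∀ j ≤ q, |y j ((a : ℝ) / n) ω| ≤ M) → |blockErr x y ν n q a (a + N) ω| ≤ G ω := by
  have hq1 : (1 : ℝ) ≤ q := by exact_mod_cast hq
  have hν1 : 2 * ν < 1 := by nlinarith
  obtain ⟨C₁, hC₁, hb₁⟩ := hy.remSum_bound hx hν hq hqν
  obtain ⟨C₂, hC₂, hb₂⟩ := hx.sum_sq_bound hν hν1 hq
  refine ⟨C₁ + (q + 1) * √C₂ + |K₀|, by positivity, fun n a N hn haN M hM => ?_⟩
  have hn' : (0 : ℝ) < n := by exact_mod_cast hn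
  set θ : ℝ := (n : ℝ) ^ (-(1 - (q : ℝ) * ν)) with hθ
  have hθ0 : 0 ≤ θ := by positivity
  set S : ℕ → Ω → ℝ := fun j ω =>
    ∑ k ∈ Finset.range N, (hermTerm x ν n a q j k ω - limMean q j) with hS
  have hNn : (N : ℝ) ≤ n := by exact_mod_cast (by omega : N ≤ n)
  have iR : Integrable (fun ω => θ * |remSum x y ν n q a (a + N) ω|) P :=
    (hy.integrable_remSum hx haN).abs.const_mul _
  have hSm : ∀ j, AllMom P (S j) := fun j => AllMom.sum _ fun k hk =>
    (hx.allMom_hermTerm q j (by have := Finset.mem_range.1 hk; omega)).sub (AllMom.const _)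
  have iS' : ∀ j ∈ Finset.range (q + 1),
      Integrable (fun ω => θ * (n : ℝ) ^ (-(j * ν)) * (M * |S j ω|)) P := fun j _ =>
    (((hSm j).integrable.abs).const_mul M).const_mul _
  have iS : Integrable (fun ω => ∑ j ∈ Finset.range (q + 1),
      θ * (n : ℝ) ^ (-(j * ν)) * (M * |S j ω|)) P := integrable_finsetSum _ iS'
  have hmem : ∀ k ∈ Finset.Ico a (a + N),
      MemLp (ctrlRem x y q q ((a : ℝ) / n) ((k : ℝ) / n)) 2 P ∧
      ∫ ω, |ctrlRem x y q q ((a : ℝ) / n) ((k : ℝ) / n) ω| ∂P ≤ |K₀| * ((N : ℝ) / n) ^ ν := by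
    intro k hk
    have hk := Finset.mem_Ico.1 hk
    have s0 := (mem_Icc_div hn (by omega : a ≤ n)).1
    have st := div_le_div_nat (n := n) hk.1
    have t1 := (mem_Icc_div hn (by omega : k ≤ n)).2
    have m := hy.memLp_ctrlRem hx le_rfl s0 st t1
    refine ⟨m, (integral_abs_le_of_sq m (mul_nonneg (abs_nonneg _)
      (Real.rpow_nonneg (by linarith) _)) (hy.integral_ctrlRem_sq hx le_rfl s0 st t1)).trans ?_⟩
    refine mul_le_mul_of_nonneg_left ?_ (abs_nonneg _)
    rw [show ((q + 1 - q : ℕ) : ℝ) * ν = ν by simp]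
    refine Real.rpow_le_rpow (by linarith) ?_ hν.le
    rw [← sub_div]
    refine div_le_div_of_nonneg_right ?_ hn'.le
    have : (k : ℝ) ≤ a + N := by exact_mod_cast hk.2.le
    linarith
  have iK' : ∀ k ∈ Finset.Ico a (a + N),
      Integrable (fun ω => |ctrlRem x y q q ((a : ℝ) / n) ((k : ℝ) / n) ω|) P := fun k hk =>
    ((hmem k hk).1.integrable (by norm_num)).abs
  have iK : Integrable (fun ω => (n : ℝ)⁻¹ * ∑ k ∈ Finset.Ico a (a + N),
      |ctrlRem x y q q ((a : ℝ) / n) ((k : ℝ) / n) ω|) P :=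
    (integrable_finsetSum _ iK').const_mul _
  refine ⟨fun ω => θ * |remSum x y ν n q a (a + N) ω| +
    ∑ j ∈ Finset.range (q + 1), θ * (n : ℝ) ^ (-(j * ν)) * (M * |S j ω|) +
    (n : ℝ)⁻¹ * ∑ k ∈ Finset.Ico a (a + N), |ctrlRem x y q q ((a : ℝ) / n) ((k : ℝ) / n) ω|,
    (iR.add iS).add iK, fun ω => ?_, ?_, fun ω hω => ?_⟩
  · positivity
  · have iRS : Integrable (fun ω => θ * |remSum x y ν n q a (a + N) ω| +
        ∑ j ∈ Finset.range (q + 1), θ * (n : ℝ) ^ (-(j * ν)) * (M * |S j ω|)) P := iR.add iS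
    beta_reduce
    rw [integral_add iRS iK, integral_add iR iS, integral_finsetSum _ iS',
      integral_const_mul, integral_const_mul, integral_finsetSum _ iK']
    have b1 : θ * ∫ ω, |remSum x y ν n q a (a + N) ω| ∂P ≤ C₁ * ((N : ℝ) / n) ^ (1 + ν) := by
      have e : θ * (n : ℝ) ^ (-((q + 1) * ν)) = ((n : ℝ) ^ (1 + ν))⁻¹ := by
        rw [hθ, ← Real.rpow_add hn', ← Real.rpow_neg hn'.le]; congr 1; ring
      refine (mul_le_mul_of_nonneg_left (hb₁ n a N hn haN) hθ0).trans (le_of_eq ?_)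
      rw [Real.div_rpow (by positivity) hn'.le, div_eq_mul_inv, ← e]; ring
    have b2 : ∀ j ∈ Finset.range (q + 1),
        ∫ ω, θ * (n : ℝ) ^ (-(j * ν)) * (M * |S j ω|) ∂P ≤
          √C₂ * (M * (n : ℝ) ^ (q * ν - 1 / 2)) := by
      intro j hj
      have hj : j ≤ q := by have := Finset.mem_range.1 hj; omega
      have hSj : ∫ ω, |S j ω| ∂P ≤ √C₂ * (n : ℝ) ^ (1 / 2 + j * ν) := by
        refine integral_abs_le_of_sq (hSm j).memLp_two (by positivity) ?_
        have hr : (√C₂ * (n : ℝ) ^ (1 / 2 + j * ν)) ^ 2 = C₂ * (n : ℝ) ^ (1 + 2 * j * ν) := by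
          rw [mul_pow, Real.sq_sqrt hC₂, ← Real.rpow_natCast, ← Real.rpow_mul hn'.le]
          congr 2; push_cast; ring
        rw [hr]
        rcases Nat.eq_zero_or_pos N with h0 | hN
        · subst h0
          simp only [hS, Finset.range_zero, Finset.sum_empty]
          rw [zero_pow two_ne_zero, integral_zero]
          positivity
        · refine (hb₂ j hj n a N hN haN).trans (mul_le_mul_of_nonneg_left ?_ hC₂)
          exact Real.rpow_le_rpow (by positivity) hNn (by positivity)
      have e : θ * (n : ℝ) ^ (-(j * ν)) * (n : ℝ) ^ (1 / 2 + j * ν) =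
          (n : ℝ) ^ (q * ν - 1 / 2) := by
        rw [hθ, ← Real.rpow_add hn', ← Real.rpow_add hn']; congr 1; ring
      rw [integral_const_mul, integral_const_mul]
      calc _ ≤ θ * (n : ℝ) ^ (-(j * ν)) * (M * (√C₂ * (n : ℝ) ^ (1 / 2 + j * ν))) := by gcongr
        _ = √C₂ * (M * (θ * (n : ℝ) ^ (-(j * ν)) * (n : ℝ) ^ (1 / 2 + j * ν))) := by ring
        _ = _ := by rw [e]
    have b2' := Finset.sum_le_sum b2
    rw [Finset.sum_const, Finset.card_range, nsmul_eq_mul] at b2'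
    push_cast at b2'
    have b3 : (n : ℝ)⁻¹ * ∑ k ∈ Finset.Ico a (a + N),
        ∫ ω, |ctrlRem x y q q ((a : ℝ) / n) ((k : ℝ) / n) ω| ∂P ≤
          |K₀| * ((N : ℝ) / n) ^ (1 + ν) := by
      refine (mul_le_mul_of_nonneg_left (Finset.sum_le_sum fun k hk => (hmem k hk).2)
        (by positivity)).trans (le_of_eq ?_)
      rw [Finset.sum_const, Nat.card_Ico, Nat.add_sub_cancel_left, nsmul_eq_mul,
        Real.rpow_one_add' (by positivity) (by positivity)]
      ring
    have p1 : 0 ≤ ((N : ℝ) / n) ^ (1 + ν) := by positivity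
    have p2 : 0 ≤ M * (n : ℝ) ^ (q * ν - 1 / 2) := by positivity
    have p3 : 0 ≤ (q + 1) * √C₂ * ((N : ℝ) / n) ^ (1 + ν) := by positivity
    have p4 : 0 ≤ (C₁ + |K₀|) * (M * (n : ℝ) ^ (q * ν - 1 / 2)) := by positivity
    nlinarith
  · rw [blockErr_eq hn]
    refine (abs_sub _ _).trans (add_le_add ((abs_add_le _ _).trans (add_le_add ?_ ?_)) ?_)
    · rw [abs_mul, abs_of_nonneg hθ0]
    · refine (Finset.abs_sum_le_sum_abs _ _).trans (Finset.sum_le_sum fun j hj => ?_)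
      have hj : j ≤ q := by have := Finset.mem_range.1 hj; omega
      have hf : (1 : ℝ) ≤ j.factorial := by exact_mod_cast Nat.factorial_pos j
      rw [abs_mul, abs_mul (y j _ ω), abs_of_nonneg (by positivity)]
      refine mul_le_mul (mul_le_mul_of_nonneg_left (div_le_self (by positivity) hf) hθ0)
        (mul_le_mul_of_nonneg_right (hω j hj) (abs_nonneg _)) (by positivity) (by positivity)
    · rw [abs_mul, abs_div, abs_pow, Nat.abs_cast, div_eq_mul_inv]
      refine mul_le_mul (mul_le_of_le_one_left (by positivity)
        (pow_le_one₀ (abs_nonneg _) ?_)) (Finset.abs_sum_le_sum_abs _ _) (abs_nonneg _)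
        (by positivity)
      rw [abs_le]; norm_num

/-- The same for the whole sum, by cutting `[0, n)` into `m` blocks of comparable length. -/
lemma Controlled.total_bound (hx : IsFBM P ν x) (hν : 0 < ν) (hq : 1 ≤ q)
    (hqν : 2 * (q * ν) < 1) (hy : Controlled P ν (q + 1) K₀ (xlift x) y) :
    ∃ C : ℝ, 0 ≤ C ∧ ∀ n m : ℕ, 0 < m → m ≤ n → ∀ M : ℝ, 0 ≤ M → ∃ G : Ω → ℝ,
      Integrable G P ∧ (∀ ω, 0 ≤ G ω) ∧
      ∫ ω, G ω ∂P ≤ C * ((m : ℝ) ^ (-ν) + m * (M * (n : ℝ) ^ (q * ν - 1 / 2))) ∧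
      ∀ ω, (∀ a ≤ n, ∀ j ≤ q, |y j ((a : ℝ) / n) ω| ≤ M) → |blockErr x y ν n q 0 n ω| ≤ G ω := by
  obtain ⟨C, hC, hb⟩ := hy.block_bound hx hν hq hqν
  have h2 : (1 : ℝ) ≤ 2 ^ (1 + ν) := Real.one_le_rpow (by norm_num) (by linarith)
  refine ⟨C * 2 ^ (1 + ν), by positivity, fun n m hm hmn M hM => ?_⟩
  have hn : 0 < n := by omega
  have hn' : (0 : ℝ) < n := by exact_mod_cast hn
  have hm' : (0 : ℝ) < m := by exact_mod_cast hm
  have hmn' : (m : ℝ) ≤ n := by exact_mod_cast hmn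
  set e : ℕ → ℕ := fun i => i * n / m with he
  have hmono : ∀ i, e i ≤ e (i + 1) := fun i =>
    Nat.div_le_div_right (Nat.mul_le_mul_right _ (Nat.le_succ i))
  have hle : ∀ i, i < m → e (i + 1) ≤ n := fun i hi => by
    refine Nat.div_le_of_le_mul ?_
    exact Nat.mul_le_mul_right _ hi
  have hlen : ∀ i, ((e (i + 1) - e i : ℕ) : ℝ) / n ≤ 2 / m := by
    intro i
    have h1 : m * e (i + 1) ≤ (i + 1) * n := Nat.mul_div_le _ _
    have h3 : i * n < m * (e i + 1) := Nat.lt_mul_div_succ _ hm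
    have h1' : (m : ℝ) * e (i + 1) ≤ (i + 1) * n := by exact_mod_cast h1
    have h3' : (i : ℝ) * n < m * (e i + 1) := by exact_mod_cast h3
    rw [Nat.cast_sub (hmono i), div_le_div_iff₀ hn' hm']
    nlinarith
  have hsum : ∀ ω, ∀ r, blockErr x y ν n q 0 (e r) ω =
      ∑ i ∈ Finset.range r, blockErr x y ν n q (e i) (e (i + 1)) ω := by
    intro ω r
    induction r with
    | zero => simp [he, blockErr]
    | succ r ih =>
      rw [Finset.sum_range_succ, ← ih]
      exact (Finset.sum_Ico_consecutive _ (Nat.zero_le _) (hmono r)).symm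
  have hem : e m = n := by simp [he, Nat.mul_div_cancel_left _ hm]
  have hch : ∀ i : ℕ, ∃ G : Ω → ℝ, i < m → Integrable G P ∧ (∀ ω, 0 ≤ G ω) ∧
      ∫ ω, G ω ∂P ≤ C * ((((e (i + 1) - e i : ℕ) : ℝ) / n) ^ (1 + ν) +
        M * (n : ℝ) ^ (q * ν - 1 / 2)) ∧
      ∀ ω, (∀ j ≤ q, |y j ((e i : ℝ) / n) ω| ≤ M) →
        |blockErr x y ν n q (e i) (e (i + 1)) ω| ≤ G ω := by
    intro i
    by_cases hi : i < m
    · have hh : e i + (e (i + 1) - e i) = e (i + 1) := by have := hmono i; omega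
      obtain ⟨G, hG⟩ := hb n (e i) (e (i + 1) - e i) hn (by rw [hh]; exact hle i hi) M hM
      rw [hh] at hG
      exact ⟨G, fun _ => hG⟩
    · exact ⟨0, fun h => absurd h hi⟩
  choose G hG using hch
  have hG' := fun i (hi : i ∈ Finset.range m) => hG i (Finset.mem_range.1 hi)
  refine ⟨fun ω => ∑ i ∈ Finset.range m, G i ω, integrable_finsetSum _ fun i hi => (hG' i hi).1,
    fun ω => Finset.sum_nonneg fun i hi => (hG' i hi).2.1 ω, ?_, fun ω hω => ?_⟩
  · rw [integral_finsetSum _ fun i hi => (hG' i hi).1]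
    have hi : ∀ i ∈ Finset.range m, ∫ ω, G i ω ∂P ≤
        C * ((2 / (m : ℝ)) ^ (1 + ν) + M * (n : ℝ) ^ (q * ν - 1 / 2)) := fun i hi => by
      refine (hG' i hi).2.2.1.trans (mul_le_mul_of_nonneg_left (add_le_add ?_ le_rfl) hC)
      exact Real.rpow_le_rpow (by positivity) (hlen i) (by positivity)
    refine (Finset.sum_le_sum hi).trans ?_
    rw [Finset.sum_const, Finset.card_range, nsmul_eq_mul]
    have e1 : (m : ℝ) * (2 / (m : ℝ)) ^ (1 + ν) = 2 ^ (1 + ν) * (m : ℝ) ^ (-ν) := by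
      rw [Real.div_rpow (by norm_num) hm'.le, Real.rpow_one_add' hm'.le (by positivity),
        Real.rpow_neg hm'.le]
      field_simp
    have p0 : 0 ≤ C * (m * (M * (n : ℝ) ^ (q * ν - 1 / 2))) := by positivity
    calc _ = C * (m * (2 / (m : ℝ)) ^ (1 + ν)) + C * (m * (M * (n : ℝ) ^ (q * ν - 1 / 2))) := by
          ring
      _ ≤ C * (m * (2 / (m : ℝ)) ^ (1 + ν)) +
          2 ^ (1 + ν) * (C * (m * (M * (n : ℝ) ^ (q * ν - 1 / 2)))) :=
          add_le_add le_rfl (le_mul_of_one_le_left p0 h2)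
      _ = _ := by rw [e1]; ring
  · have h := hsum ω m
    rw [hem] at h
    rw [h]
    refine (Finset.abs_sum_le_sum_abs _ _).trans (Finset.sum_le_sum fun i hi => ?_)
    refine (hG' i hi).2.2.2 ω fun j hj => hω (e i) ?_ j hj
    exact (hmono i).trans (hle i (Finset.mem_range.1 hi))

end Blocks

/-! ### Convergence in probability -/

section Convergence

variable {Ω : Type*} [MeasurableSpace Ω] {P : Measure Ω} [IsProbabilityMeasure P]
  {ν K₀ : ℝ} {q : ℕ} {x : ℝ → Ω → ℝ} {y : ℕ → ℝ → Ω → ℝ}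

/-- The event that some weight exceeds `M` at some rational partition point. -/
def largeSet (y : ℕ → ℝ → Ω → ℝ) (q M : ℕ) : Set Ω :=
  ⋃ (n : ℕ) (a : ℕ) (_ : 0 < n ∧ a ≤ n) (j : ℕ) (_ : j ≤ q), {ω | (M : ℝ) < |y j ((a : ℝ) / n) ω|}

lemma mem_largeSet {M : ℕ} {ω : Ω} : ω ∈ largeSet y q M ↔
    ∃ n a : ℕ, (0 < n ∧ a ≤ n) ∧ ∃ j ≤ q, (M : ℝ) < |y j ((a : ℝ) / n) ω| := by
  simp [largeSet, and_assoc]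

/-- Continuous paths are bounded on `[0,1]`, so the weights are bounded by a large `M` with
probability close to one. -/
lemma Controlled.tendsto_largeSet (hy : Controlled P ν (q + 1) K₀ (xlift x) y) :
    Tendsto (fun M => P.real (largeSet y q M)) atTop (nhds 0) := by
  have hmeas : ∀ M, NullMeasurableSet (largeSet y q M) P := fun M => by
    refine MeasurableSet.nullMeasurableSet ?_
    refine MeasurableSet.iUnion fun n => MeasurableSet.iUnion fun a => MeasurableSet.iUnion fun _ =>
      MeasurableSet.iUnion fun j => MeasurableSet.iUnion fun hj => ?_
    exact measurableSet_lt measurable_const (hy.1 j (by omega) _).abs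
  have hanti : Antitone (largeSet y q) := by
    intro M M' h ω hω
    rw [mem_largeSet] at hω ⊢
    obtain ⟨n, a, hna, j, hj, hlt⟩ := hω
    exact ⟨n, a, hna, j, hj, lt_of_le_of_lt (by exact_mod_cast h) hlt⟩
  have hempty : ⋂ M, largeSet y q M = ∅ := by
    refine Set.eq_empty_of_forall_notMem fun ω hω => ?_
    have hbd : ∀ j, ∃ B : ℝ, j ≤ q → ∀ t ∈ Set.Icc (0 : ℝ) 1, |y j t ω| ≤ B := by
      intro j
      by_cases hj : j ≤ q
      · obtain ⟨B, hB⟩ := isCompact_Icc.exists_bound_of_continuousOn (hy.2.1 j (by omega) ω)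
        exact ⟨B, fun _ t ht => by simpa using hB t ht⟩
      · exact ⟨0, fun h => absurd h hj⟩
    choose B hB using hbd
    obtain ⟨M, hM⟩ := exists_nat_ge (∑ j ∈ Finset.range (q + 1), |B j|)
    have h := Set.mem_iInter.1 hω M
    rw [mem_largeSet] at h
    obtain ⟨n, a, hna, j, hj, hlt⟩ := h
    have h1 := hB j hj _ (mem_Icc_div hna.1 hna.2)
    have h2 := Finset.single_le_sum (f := fun j => |B j|) (fun i _ => abs_nonneg _)
      (Finset.mem_range.2 (Nat.lt_succ_of_le hj))
    have h3 := le_abs_self (B j)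
    linarith
  have h := tendsto_measure_iInter_atTop (μ := P) hmeas hanti ⟨0, measure_ne_top _ _⟩
  rw [hempty, measure_empty] at h
  have hlim := (ENNReal.tendsto_toReal ENNReal.zero_ne_top).comp h
  rwa [ENNReal.toReal_zero] at hlim

/-- The normalized weighted sum and the Riemann sum of the top-order weight are asymptotically
equal in probability. The bound `M` on the weights is fixed before the number `m` of blocks, and
both before `n` tends to infinity. -/
lemma Controlled.tendsto_blockErr (hx : IsFBM P ν x) (hν : 0 < ν) (hq : 1 ≤ q)
    (hqν : 2 * (q * ν) < 1) (hy : Controlled P ν (q + 1) K₀ (xlift x) y) {ε : ℝ} (hε : 0 < ε) :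
    Tendsto (fun n => P.real {ω | ε ≤ |blockErr x y ν n q 0 n ω|}) atTop (nhds 0) := by
  obtain ⟨C, hC, hb⟩ := hy.total_bound hx hν hq hqν
  rw [tendsto_order]
  refine ⟨fun b hb' => Eventually.of_forall fun n => lt_of_lt_of_le hb' measureReal_nonneg,
    fun δ hδ => ?_⟩
  obtain ⟨M, hM⟩ := ((tendsto_order.1 hy.tendsto_largeSet).2 (δ / 3) (by positivity)).exists
  have hm0 : Tendsto (fun m : ℕ => C * (m : ℝ) ^ (-ν)) atTop (nhds 0) := by
    have := ((tendsto_rpow_neg_atTop hν).comp tendsto_natCast_atTop_atTop).const_mul C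
    simpa using this
  obtain ⟨m, hm, hmpos⟩ := (((tendsto_order.1 hm0).2 (ε * (δ / 3)) (by positivity)).and
    (eventually_gt_atTop 0)).exists
  have hn0 : Tendsto (fun n : ℕ => C * (m * (M * (n : ℝ) ^ (q * ν - 1 / 2)))) atTop (nhds 0) := by
    have h1 : Tendsto (fun n : ℕ => (n : ℝ) ^ (-(1 / 2 - q * ν))) atTop (nhds 0) :=
      (tendsto_rpow_neg_atTop (by linarith)).comp tendsto_natCast_atTop_atTop
    have := ((h1.const_mul (M : ℝ)).const_mul (m : ℝ)).const_mul C
    simpa using this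
  filter_upwards [(tendsto_order.1 hn0).2 (ε * (δ / 3)) (by positivity), eventually_ge_atTop m]
    with n hn hmn
  obtain ⟨G, hGi, hG0, hGint, hG⟩ := hb n m hmpos hmn M (Nat.cast_nonneg M)
  have hsub : {ω | ε ≤ |blockErr x y ν n q 0 n ω|} ⊆ largeSet y q M ∪ {ω | ε ≤ G ω} := by
    intro ω hω
    by_cases h : ω ∈ largeSet y q M
    · exact Or.inl h
    · refine Or.inr (le_trans hω (hG ω fun a ha j hj => ?_))
      by_contra hlt
      exact h (mem_largeSet.2 ⟨n, a, ⟨by omega, ha⟩, j, hj, not_le.1 hlt⟩)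
  have hmk := mul_meas_ge_le_integral_of_nonneg (ae_of_all P hG0) hGi ε
  have hG3 : P.real {ω | ε ≤ G ω} < 2 * (δ / 3) := by
    have : ε * P.real {ω | ε ≤ G ω} < ε * (2 * (δ / 3)) := by
      rw [mul_add] at hGint
      linarith
    exact lt_of_mul_lt_mul_left this hε.le
  have h1 := measureReal_mono (μ := P) hsub (measure_ne_top _ _)
  have h2 := measureReal_union_le (μ := P) (largeSet y q M) {ω | ε ≤ G ω}
  linarith

lemma tendsto_riemann_sum {f : ℝ → ℝ} (hf : ContinuousOn f (Set.Icc 0 1)) :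
    Tendsto (fun n : ℕ => (n : ℝ)⁻¹ * ∑ k ∈ Finset.range n, f ((k : ℝ) / n)) atTop
      (nhds (∫ v in (0 : ℝ)..1, f v)) := by
  rw [Metric.tendsto_atTop]
  intro ε hε
  have huc := isCompact_Icc.uniformContinuousOn_of_continuous hf
  obtain ⟨δ, hδ, hf'⟩ := Metric.uniformContinuousOn_iff.1 huc (ε / 2) (by positivity)
  obtain ⟨n₀, hn₀⟩ := exists_nat_gt (1 / δ)
  refine ⟨n₀ + 1, fun n hn => ?_⟩
  have hn0 : 0 < n := by omega
  have hn' : (0 : ℝ) < n := by exact_mod_cast hn0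
  have hnδ : (n : ℝ)⁻¹ < δ := by
    have h1 : (n₀ : ℝ) ≤ n := by exact_mod_cast (by omega : n₀ ≤ n)
    rw [inv_lt_comm₀ hn' hδ, ← one_div]
    linarith
  have hpt : ∀ k ≤ n, (k : ℝ) / n ∈ Set.Icc (0 : ℝ) 1 := fun k hk => mem_Icc_div hn0 hk
  have hstep : ∀ k : ℕ, ((k + 1 : ℕ) : ℝ) / n = (k : ℝ) / n + (n : ℝ)⁻¹ := fun k => by
    push_cast; rw [add_div, one_div]
  have hsubset : ∀ k < n, Set.uIcc ((k : ℝ) / n) (((k + 1 : ℕ) : ℝ) / n) ⊆ Set.Icc 0 1 := by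
    intro k hk
    rw [Set.uIcc_of_le (by rw [hstep]; linarith [inv_pos.2 hn'])]
    exact Set.Icc_subset_Icc (hpt k hk.le).1 (hpt (k + 1) hk).2
  have hintg : ∀ k < n, IntervalIntegrable f volume ((k : ℝ) / n) (((k + 1 : ℕ) : ℝ) / n) :=
    fun k hk => (hf.mono (hsubset k hk)).intervalIntegrable
  have hsum := intervalIntegral.sum_integral_adjacent_intervals
    (a := fun k : ℕ => (k : ℝ) / n) (f := f) (μ := volume) hintg
  simp only [Nat.cast_zero, zero_div, div_self hn'.ne'] at hsum
  rw [Real.dist_eq, ← hsum, Finset.mul_sum, ← Finset.sum_sub_distrib]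
  have hk : ∀ k ∈ Finset.range n, |(n : ℝ)⁻¹ * f ((k : ℝ) / n) -
      ∫ v in ((k : ℝ) / n)..(((k + 1 : ℕ) : ℝ) / n), f v| ≤ ε / 2 * (n : ℝ)⁻¹ := by
    intro k hk
    have hk := Finset.mem_range.1 hk
    have hw : ((k + 1 : ℕ) : ℝ) / n - (k : ℝ) / n = (n : ℝ)⁻¹ := by rw [hstep]; ring
    have e : (n : ℝ)⁻¹ * f ((k : ℝ) / n) =
        ∫ _v in ((k : ℝ) / n)..(((k + 1 : ℕ) : ℝ) / n), f ((k : ℝ) / n) := by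
      rw [intervalIntegral.integral_const, hw, smul_eq_mul]
    rw [e, ← intervalIntegral.integral_sub intervalIntegrable_const (hintg k hk)]
    have h := intervalIntegral.norm_integral_le_of_norm_le_const (C := ε / 2)
      (f := fun v => f ((k : ℝ) / n) - f v) (a := (k : ℝ) / n) (b := ((k + 1 : ℕ) : ℝ) / n) ?_
    · rwa [hw, abs_of_pos (inv_pos.2 hn')] at h
    · intro v hv
      have hv' := Set.uIoc_subset_uIcc hv
      have hv1 := hsubset k hk hv'
      rw [Set.uIcc_of_le (by rw [hstep]; linarith [inv_pos.2 hn']), hstep] at hv'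
      refine (hf' _ (hpt k hk.le) v hv1 ?_).le
      rw [Real.dist_eq, abs_sub_comm, abs_of_nonneg (by linarith [hv'.1])]
      linarith [hv'.2]
  calc _ ≤ ∑ k ∈ Finset.range n, ε / 2 * (n : ℝ)⁻¹ :=
        (Finset.abs_sum_le_sum_abs _ _).trans (Finset.sum_le_sum hk)
    _ = ε / 2 := by rw [Finset.sum_const, Finset.card_range, nsmul_eq_mul]; field_simp
    _ < ε := by linarith

lemma Jone_zero_one (hy0 : ∀ ω, y 0 0 ω = 0) (n : ℕ) (h : ℕ → Ω → ℝ) (ω : Ω) :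
    Jone n (y 0) h 0 1 ω = ∑ k ∈ Finset.range n, y 0 ((k : ℝ) / n) ω * h k ω := by
  refine Finset.sum_congr rfl fun k hk => ?_
  have hk := Finset.mem_range.1 hk
  have hn' : (0 : ℝ) < n := by exact_mod_cast (by omega : 0 < n)
  have hlt : (k : ℝ) / n < 1 := (div_lt_one hn').2 (by exact_mod_cast hk)
  rw [if_pos ⟨by positivity, hlt⟩]
  simp [eps, hy0]

end Convergence

/-- **Subcritical weighted Hermite variation** (Proposition 4.10 (ii)): for fBm with
`ν < 1/(2q)` and a weight controlled by the canonical lift of `x` with `ℓ = q+1`,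
`n^{-(1-qν)} J_0^1(y^{(0)};h^{n,q})` converges in probability to
`(-1/2)^q ∫₀¹ y^{(q)}_u du`. -/
theorem subcritical_weighted_hermite_variation
    {Ω : Type*} [MeasurableSpace Ω] (P : Measure Ω) [IsProbabilityMeasure P]
    (q : ℕ) (hq : 1 ≤ q) (ν : ℝ) (hν : 0 < ν) (hν2 : ν < 1 / (2 * (q : ℝ)))
    (x : ℝ → Ω → ℝ) (hx : IsFBM P ν x)
    (K₀ : ℝ) (y : ℕ → ℝ → Ω → ℝ) (hy : Controlled P ν (q + 1) K₀ (xlift x) y) :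
    TendstoInMeasure P
      (fun n : ℕ => fun ω => (n : ℝ) ^ (-(1 - (q : ℝ) * ν)) *
        Jone n (y 0) (hermIncr x ν n q) 0 1 ω)
      atTop
      (fun ω => (-(1 : ℝ) / 2) ^ q * ∫ v in (0 : ℝ)..1, y q v ω) := by
  have hqν : 2 * (q * ν) < 1 := by
    have hq' : (0 : ℝ) < 2 * q := by positivity
    have := (lt_div_iff₀ hq').1 hν2
    linarith
  set R : ℕ → Ω → ℝ := fun n ω => (-(1 : ℝ) / 2) ^ q *
    ((n : ℝ)⁻¹ * ∑ k ∈ Finset.range n, y q ((k : ℝ) / n) ω) with hR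
  have hRm : TendstoInMeasure P R atTop
      (fun ω => (-(1 : ℝ) / 2) ^ q * ∫ v in (0 : ℝ)..1, y q v ω) := by
    refine tendstoInMeasure_of_tendsto_ae (fun n => ?_) (ae_of_all P fun ω => ?_)
    · refine Measurable.aestronglyMeasurable ?_
      exact ((Finset.measurable_fun_sum _ fun k _ => hy.1 q (by omega) _).const_mul _).const_mul _
    · exact (tendsto_riemann_sum (hy.2.1 q (by omega) ω)).const_mul _
  have hE : ∀ (n : ℕ) ω, (n : ℝ) ^ (-(1 - (q : ℝ) * ν)) * Jone n (y 0) (hermIncr x ν n q) 0 1 ω =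
      blockErr x y ν n q 0 n ω + R n ω := by
    intro n ω
    rw [Jone_zero_one hy.2.2.1, blockErr, ← Finset.range_eq_Ico, Finset.sum_sub_distrib,
      ← Finset.mul_sum, ← Finset.mul_sum]
    simp only [hR]
    ring
  rw [tendstoInMeasure_iff_measureReal_norm] at hRm ⊢
  intro ε hε
  have h1 := hy.tendsto_blockErr hx hν hq hqν (half_pos hε)
  have h2 := h1.add (hRm (ε / 2) (half_pos hε))
  rw [add_zero] at h2
  refine squeeze_zero (fun n => measureReal_nonneg) (fun n => ?_) h2
  refine (measureReal_mono ?_ (measure_ne_top _ _)).trans (measureReal_union_le _ _)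
  intro ω hω
  simp only [Set.mem_ofPred_eq, hE, Real.norm_eq_abs] at hω
  simp only [Set.mem_union, Set.mem_ofPred_eq, Real.norm_eq_abs]
  by_contra hcon
  push Not at hcon
  have := abs_add_le (blockErr x y ν n q 0 n ω)
    (R n ω - (-(1 : ℝ) / 2) ^ q * ∫ v in (0 : ℝ)..1, y q v ω)
  rw [← add_sub_assoc] at this
  linarith [hcon.1, hcon.2]

end
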